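/- arXiv:1609.07219 — 2 statements merged into one kernel-verified Lean document; each statement's English description precedes it below -/
import Mathlib

section
/- Let Q be a routing matrix and let (e(0), f(0)) ∈ 𝒯. Then there exists exactly one fluid model solution (e, f, u) with initial condition (e(0), f(0)); that is, there exists exactly one triple of continuous functions e, f : [0,∞) → ℝ^{r×r} with (e(t), f(t)) ∈ 𝒯 for all t, and u : [0,∞) → ℝ_{≥0}^r, satisfying the fluid model equations with this initial condition. -/
open Finset Filter Topology MeasureTheory intervalIntegral

abbrev Mat (r : ℕ) := Fin r → Fin r → ℝ

structure NetParams (r : ℕ) where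
  lam : Fin r → ℝ
  mu : Mat r
  P : Mat r
  lam_pos : ∀ i, 0 < lam i
  mu_pos : ∀ i j, 0 < mu i j
  P_nonneg : ∀ i j, 0 ≤ P i j
  P_rowsum : ∀ i, ∑ j, P i j = 1

def IsRouting {r : ℕ} (q : Mat r) : Prop :=
  (∀ i j, 0 ≤ q i j) ∧ ∀ i, ∑ j, q i j = 1

def MemT {r : ℕ} (e f : Mat r) : Prop :=
  (∀ i j, e i j ∈ Set.Icc (0:ℝ) 1) ∧ (∀ i j, f i j ∈ Set.Icc (0:ℝ) 1) ∧
    (∑ i, ∑ j, (e i j + f i j)) = 1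

open scoped Classical in
/-- The Lebesgue–Stieltjes measure associated with a non-decreasing `g : ℝ → ℝ`
(junk value `0` if `g` is not monotone). -/
noncomputable def lsMeasure (g : ℝ → ℝ) : Measure ℝ :=
  if h : Monotone g then h.stieltjesFunction.measure else 0

/-- A fluid model solution `(e, f, u)` for the ridesharing network with static
routing matrix `Q`.  All functions are defined on `ℝ`, but only their values
on `[0, ∞)` are relevant; `u` is extended by `0` on `(-∞, 0]`. -/
structure IsFluidSol {r : ℕ} (np : NetParams r) (Q : Mat r) (e f : ℝ → Mat r)
    (u : ℝ → Fin r → ℝ) : Prop where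
  cont_e : ∀ i j, ContinuousOn (fun t => e t i j) (Set.Ici 0)
  cont_f : ∀ i j, ContinuousOn (fun t => f t i j) (Set.Ici 0)
  mem_T : ∀ t, 0 ≤ t → MemT (e t) (f t)
  u_nonneg : ∀ t i, 0 ≤ u t i
  u_mono : ∀ i, Monotone fun t => u t i
  u_zero : ∀ i, ∀ t ≤ (0:ℝ), u t i = 0
  eq_f : ∀ i j, ∀ t, 0 ≤ t →
    f t i j = f 0 i j + np.lam i * np.P i j * (t - u t i)
      - np.mu i j * ∫ s in (0:ℝ)..t, f s i j
  eq_e_off : ∀ i j, i ≠ j → ∀ t, 0 ≤ t →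
    e t i j = e 0 i j - np.mu i j * (∫ s in (0:ℝ)..t, e s i j)
      + Q i j * ∑ k, np.mu k i * ∫ s in (0:ℝ)..t, f s k i
  eq_e_diag : ∀ i, ∀ t, 0 ≤ t →
    e t i i = e 0 i i - np.lam i * (t - u t i)
      + (∑ j ∈ Finset.univ.filter (fun j => j ≠ i), np.mu j i * ∫ s in (0:ℝ)..t, e s j i)
      + Q i i * ∑ j, np.mu j i * ∫ s in (0:ℝ)..t, f s j i
  compl : ∀ i, ∫⁻ s in Set.Ici (0:ℝ),
      ENNReal.ofReal (e s i i) ∂(lsMeasure fun t => u t i) = 0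

open scoped Classical in
/-- The equilibrium set ℰ associated to the routing matrix `Q`. -/
noncomputable def eqSet {r : ℕ} (np : NetParams r) (Q : Mat r) : Set (Mat r × Mat r) :=
  {p | MemT p.1 p.2 ∧ ∃ a : Fin r → ℝ, (∀ i, 0 ≤ a i ∧ a i ≤ 1) ∧
    (∀ i j, np.lam i * np.P i j * a i = np.mu i j * p.2 i j) ∧
    (∀ i j, i ≠ j → np.mu i j * p.1 i j = Q i j * ∑ k, np.mu k i * p.2 k i) ∧
    (∀ i, np.lam i * a i =
      (∑ k ∈ Finset.univ.filter (fun k => k ≠ i), np.mu k i * p.1 k i)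
        + Q i i * ∑ k, np.mu k i * p.2 k i) ∧
    (∀ i, (1 - a i) * p.1 i i = 0)}

/-- Linear filter: the solution of `L' = m (H - L)`, `L 0 = 0`. -/
noncomputable def filt (m : ℝ) (H : ℝ → ℝ) (t : ℝ) : ℝ :=
  Real.exp (-(m * t)) * ∫ s in (0:ℝ)..t, m * Real.exp (m * s) * H s

lemma filt_zero (m : ℝ) (H : ℝ → ℝ) : filt m H 0 = 0 := by simp [filt]

lemma filt_hasDerivAt (m : ℝ) {H : ℝ → ℝ} (hH : Continuous H) (t : ℝ) :
    HasDerivAt (filt m H) (m * (H t - filt m H t)) t := by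
  have hc : Continuous fun s => m * Real.exp (m * s) * H s := by fun_prop
  have h1 := (hc.integral_hasStrictDerivAt 0 t).hasDerivAt
  have h2 : HasDerivAt (fun t => Real.exp (-(m * t))) (Real.exp (-(m * t)) * (-(m * 1))) t :=
    (((hasDerivAt_id t).const_mul m).neg).exp
  have h3 := h2.mul h1
  refine h3.congr_deriv ?_
  have : Real.exp (-(m * t)) * Real.exp (m * t) = 1 := by
    rw [← Real.exp_add]; simp
  simp only [filt]
  linear_combination (m * H t) * this

lemma filt_continuous (m : ℝ) {H : ℝ → ℝ} (hH : Continuous H) : Continuous (filt m H) :=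
  continuous_iff_continuousAt.2 fun t => (filt_hasDerivAt m hH t).continuousAt

lemma filt_integral (m : ℝ) {H : ℝ → ℝ} (hH : Continuous H) (t : ℝ) :
    m * ∫ s in (0:ℝ)..t, (H s - filt m H s) = filt m H t := by
  have hc := filt_continuous m hH
  rw [← intervalIntegral.integral_const_mul,
    intervalIntegral.integral_eq_sub_of_hasDerivAt (fun x _ => filt_hasDerivAt m hH x)
      (Continuous.intervalIntegrable (by fun_prop) _ _), filt_zero, sub_zero]

lemma filt_mono {m : ℝ} (hm : 0 < m) {H K : ℝ → ℝ} (hH : Continuous H) (hK : Continuous K)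
    {t : ℝ} (ht : 0 ≤ t) (h : ∀ s, 0 ≤ s → s ≤ t → H s ≤ K s) : filt m H t ≤ filt m K t := by
  refine mul_le_mul_of_nonneg_left ?_ (Real.exp_pos _).le
  refine intervalIntegral.integral_mono_on ht
    (Continuous.intervalIntegrable (by fun_prop) _ _)
    (Continuous.intervalIntegrable (by fun_prop) _ _) fun s hs => ?_
  exact mul_le_mul_of_nonneg_left (h s hs.1 hs.2) (by positivity)

lemma filt_const (m c t : ℝ) : filt m (fun _ => c) t = c * (1 - Real.exp (-(m * t))) := by
  have hd : ∀ x ∈ Set.uIcc 0 t, HasDerivAt (fun s => Real.exp (m * s) * c)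
      (m * Real.exp (m * x) * c) x := fun x _ => by
    have : HasDerivAt (fun s => Real.exp (m * s)) (Real.exp (m * x) * (m * 1)) x :=
      ((hasDerivAt_id x).const_mul m).exp
    exact (this.mul_const c).congr_deriv (by ring)
  unfold filt
  rw [intervalIntegral.integral_eq_sub_of_hasDerivAt hd
    (Continuous.intervalIntegrable (by fun_prop) _ _)]
  have : Real.exp (-(m * t)) * Real.exp (m * t) = 1 := by
    rw [← Real.exp_add]; simp
  simp only [mul_zero, Real.exp_zero]
  linear_combination c * this

lemma filt_nonneg {m : ℝ} (hm : 0 < m) {H : ℝ → ℝ} (hH : Continuous H)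
    {t : ℝ} (ht : 0 ≤ t) (h : ∀ s, 0 ≤ s → 0 ≤ H s) : 0 ≤ filt m H t := by
  have := filt_mono hm (H := fun _ => 0) continuous_const hH ht fun s hs _ => h s hs
  rwa [filt_const, zero_mul] at this

lemma filt_le {m : ℝ} (hm : 0 < m) {H : ℝ → ℝ} (hH : Continuous H)
    {t : ℝ} (ht : 0 ≤ t) (h : ∀ s, 0 ≤ s → 0 ≤ H s) (hmono : MonotoneOn H (Set.Ici 0)) :
    filt m H t ≤ H t := by
  have := filt_mono hm hH (K := fun _ => H t) continuous_const ht
    fun s hs hst => hmono hs ht hst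
  rw [filt_const] at this
  nlinarith [h t ht, Real.exp_pos (-(m * t))]

lemma filt_monotoneOn {m : ℝ} (hm : 0 < m) {H : ℝ → ℝ} (hH : Continuous H)
    (h : ∀ s, 0 ≤ s → 0 ≤ H s) (hmono : MonotoneOn H (Set.Ici 0)) :
    MonotoneOn (filt m H) (Set.Ici 0) := by
  refine monotoneOn_of_deriv_nonneg (convex_Ici 0) (filt_continuous m hH).continuousOn
    (fun t _ => (filt_hasDerivAt m hH t).differentiableAt.differentiableWithinAt) fun t ht => ?_
  rw [(filt_hasDerivAt m hH t).deriv]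
  rw [interior_Ici] at ht
  have := filt_le hm hH (le_of_lt ht) h hmono
  exact mul_nonneg hm.le (by linarith)

/-- The one-dimensional regulator. -/
noncomputable def regU (l : ℝ) (x : ℝ → ℝ) (t : ℝ) : ℝ :=
  sSup ((fun s => max (l * s - x s) 0) '' Set.Icc 0 t)

lemma regU_bdd {l : ℝ} {x : ℝ → ℝ} (hx : Continuous x) (t : ℝ) :
    BddAbove ((fun s => max (l * s - x s) 0) '' Set.Icc 0 t) :=
  (isCompact_Icc.image (by fun_prop)).bddAbove

lemma le_regU {l : ℝ} {x : ℝ → ℝ} (hx : Continuous x) {s t : ℝ} (hs : 0 ≤ s) (hst : s ≤ t) :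
    max (l * s - x s) 0 ≤ regU l x t :=
  le_csSup (regU_bdd hx t) ⟨s, ⟨hs, hst⟩, rfl⟩

lemma regU_nonneg {l : ℝ} {x : ℝ → ℝ} (hx : Continuous x) {t : ℝ} (ht : 0 ≤ t) :
    0 ≤ regU l x t := (le_max_right _ _).trans (le_regU hx ht le_rfl)

lemma regU_attain {l : ℝ} {x : ℝ → ℝ} (hx : Continuous x) {t : ℝ} (ht : 0 ≤ t) :
    ∃ s, 0 ≤ s ∧ s ≤ t ∧ regU l x t = max (l * s - x s) 0 := by
  have hne : ((fun s => max (l * s - x s) 0) '' Set.Icc 0 t).Nonempty :=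
    ⟨_, 0, ⟨le_rfl, ht⟩, rfl⟩
  obtain ⟨s, hs, h⟩ := (isCompact_Icc.image (by fun_prop :
    Continuous fun s => max (l * s - x s) 0)).sSup_mem hne
  exact ⟨s, hs.1, hs.2, h.symm⟩

lemma regU_mono {l : ℝ} {x : ℝ → ℝ} (hx : Continuous x) {s t : ℝ} (hs : 0 ≤ s) (hst : s ≤ t) :
    regU l x s ≤ regU l x t := by
  obtain ⟨a, ha, has, h⟩ := regU_attain (l := l) hx hs
  rw [h]; exact le_regU hx ha (has.trans hst)

lemma regU_lip {l : ℝ} (hl : 0 < l) {x : ℝ → ℝ} (hx : Continuous x)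
    (hm : MonotoneOn x (Set.Ici 0)) {s t : ℝ} (hs : 0 ≤ s) (hst : s ≤ t) :
    regU l x t ≤ regU l x s + l * (t - s) := by
  obtain ⟨a, ha, hat, h⟩ := regU_attain (l := l) hx (hs.trans hst)
  rw [h]
  have h2 : 0 ≤ l * (t - s) := mul_nonneg hl.le (by linarith)
  rcases le_total a s with has | has
  · have := le_regU (l := l) hx ha has
    linarith
  · have h3 := le_regU (l := l) hx hs le_rfl
    have h4 := hm hs ha has
    have h5 := (le_max_left _ _).trans h3
    refine max_le ?_ (by linarith [regU_nonneg (l := l) hx hs])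
    nlinarith

lemma regU_zero {l : ℝ} {x : ℝ → ℝ} (hx : Continuous x) (h0 : 0 ≤ x 0) : regU l x 0 = 0 := by
  obtain ⟨a, ha, hat, h⟩ := regU_attain (l := l) hx le_rfl
  obtain rfl : a = 0 := le_antisymm hat ha
  rw [h]; simp [h0]

lemma regU_anti {l : ℝ} {x y : ℝ → ℝ} (hx : Continuous x) (hy : Continuous y) {t : ℝ}
    (ht : 0 ≤ t) (h : ∀ s, 0 ≤ s → s ≤ t → x s ≤ y s) : regU l y t ≤ regU l x t := by
  obtain ⟨a, ha, hat, h'⟩ := regU_attain (l := l) hy ht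
  rw [h']
  refine le_trans ?_ (le_regU hx ha hat)
  exact max_le_max (by linarith [h a ha hat]) le_rfl

lemma regU_flat {l : ℝ} {x : ℝ → ℝ} (hx : Continuous x) {a b : ℝ}
    (ha : 0 ≤ a) (hab : a ≤ b) (h : ∀ s, a ≤ s → s ≤ b → l * s - x s < regU l x s) :
    regU l x b = regU l x a := by
  refine le_antisymm ?_ (regU_mono hx ha hab)
  obtain ⟨c, hc, hcb, h'⟩ := regU_attain (l := l) hx (ha.trans hab)
  rcases le_total c a with hca | hca
  · rw [h']; exact le_regU hx hc hca
  · have h1 := h c hca hcb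
    have h2 := regU_mono (l := l) hx hc hcb
    rcases max_choice (l * c - x c) 0 with h3 | h3
    · rw [h3] at h'; linarith
    · rw [h', h3]; exact regU_nonneg hx ha

/-- Knaster–Tarski for real valued functions. -/
lemma knaster {ι : Type*} (S : (ι → ℝ) → Prop) (Φ : (ι → ℝ) → ι → ℝ)
    (hS : ∀ D, S D → S (Φ D)) (hΦ : ∀ D E, S D → S E → D ≤ E → Φ D ≤ Φ E)
    (z : ι → ℝ) (hz : S z) (hz' : ∀ D, S D → z ≤ D)
    (B : ι → ℝ) (hB : ∀ D, S D → D ≤ B)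
    (hsup : ∀ 𝒜 : Set (ι → ℝ), 𝒜.Nonempty → (∀ D ∈ 𝒜, S D) →
      S (fun x => sSup ((fun D : ι → ℝ => D x) '' 𝒜))) :
    ∃ D, S D ∧ Φ D = D := by
  set 𝒜 : Set (ι → ℝ) := {D | S D ∧ D ≤ Φ D} with h𝒜
  have hne : 𝒜.Nonempty := ⟨z, hz, hz' _ (hS z hz)⟩
  set M : ι → ℝ := fun x => sSup ((fun D : ι → ℝ => D x) '' 𝒜) with hM
  have hSM : S M := hsup 𝒜 hne fun D hD => hD.1
  have hle : ∀ D ∈ 𝒜, D ≤ M := fun D hD x =>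
    le_csSup ⟨B x, by rintro _ ⟨E, hE, rfl⟩; exact hB E hE.1 x⟩ ⟨D, hD, rfl⟩
  have h1 : M ≤ Φ M := fun x => csSup_le (hne.image _) (by
    rintro _ ⟨E, hE, rfl⟩
    exact (hE.2 x).trans (hΦ E M hE.1 hSM (hle E hE) x))
  have h2 : Φ M ≤ M := hle _ ⟨hS M hSM, hΦ _ _ hSM (hS M hSM) h1⟩
  exact ⟨M, hSM, le_antisymm h2 h1⟩

lemma lsMeasure_Ioc {u : ℝ → ℝ} (hm : Monotone u) (hc : ContinuousOn u (Set.Ici 0)) {a b : ℝ}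
    (ha : 0 ≤ a) (hab : a ≤ b) : lsMeasure u (Set.Ioc a b) = ENNReal.ofReal (u b - u a) := by
  have key : ∀ c, 0 ≤ c → hm.stieltjesFunction c = u c := fun c hc0 => by
    rw [Monotone.stieltjesFunction_eq]
    exact ContinuousWithinAt.rightLim_eq ((hc c hc0).mono (Set.Ici_subset_Ici.2 hc0))
  rw [lsMeasure, dif_pos hm, StieltjesFunction.measure_Ioc, key a ha, key b (ha.trans hab)]

lemma flat_of_compl {u w : ℝ → ℝ} (hm : Monotone u) (hc : ContinuousOn u (Set.Ici 0))
    (hw : ContinuousOn w (Set.Ici 0))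
    (hcompl : ∫⁻ s in Set.Ici (0:ℝ), ENNReal.ofReal (w s) ∂(lsMeasure u) = 0) {a b : ℝ}
    (ha : 0 ≤ a) (hab : a ≤ b) (h : ∀ s, a < s → s ≤ b → 0 < w s) : u b = u a := by
  have hae : AEMeasurable (fun s => ENNReal.ofReal (w s))
      ((lsMeasure u).restrict (Set.Ici 0)) :=
    (hw.aemeasurable measurableSet_Ici).ennreal_ofReal
  rw [lintegral_eq_zero_iff' hae, Filter.EventuallyEq, ae_restrict_iff' measurableSet_Ici] at hcompl
  have h0 : lsMeasure u (Set.Ioc a b) = 0 := by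
    refine measure_mono_null ?_ (ae_iff.1 hcompl)
    intro s hs
    simp only [Set.mem_ofPred_eq, Pi.zero_apply, Classical.not_imp]
    refine ⟨ha.trans hs.1.le, ?_⟩
    simpa using h s hs.1 hs.2
  rw [lsMeasure_Ioc hm hc ha hab, ENNReal.ofReal_eq_zero] at h0
  exact le_antisymm (by linarith) (hm hab)

lemma compl_of_flat {u w : ℝ → ℝ} (hm : Monotone u) (hc : ContinuousOn u (Set.Ici 0))
    (hu0 : ∀ t ≤ 0, u t = 0) (hw : ContinuousOn w (Set.Ici 0))
    (h : ∀ a b, 0 ≤ a → a ≤ b → (∀ s, a ≤ s → s ≤ b → 0 < w s) → u b = u a) :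
    ∫⁻ s in Set.Ici (0:ℝ), ENNReal.ofReal (w s) ∂(lsMeasure u) = 0 := by
  refine lintegral_eq_zero_of_ae_eq_zero ?_
  rw [Filter.EventuallyEq, ae_restrict_iff' measurableSet_Ici, ae_iff]
  have hneg : ∀ c, c < 0 → hm.stieltjesFunction c = 0 := fun c hc0 => by
    rw [Monotone.stieltjesFunction_eq]
    have h1 := hm.le_rightLim (le_refl c)
    have h2 := hm.rightLim_le hc0
    rw [hu0 c hc0.le] at h1
    rw [hu0 0 le_rfl] at h2
    exact le_antisymm h2 h1
  refine measure_null_of_locally_null _ fun t ht => ?_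
  simp only [Set.mem_ofPred_eq, Pi.zero_apply, Classical.not_imp] at ht
  obtain ⟨ht0, htw⟩ := ht
  have ht0 : 0 ≤ t := ht0
  have htw : 0 < w t := by simpa using htw
  have hev : ∀ᶠ s in 𝓝[Set.Ici 0] t, 0 < w s := (hw t ht0).eventually (lt_mem_nhds htw)
  obtain ⟨ε, hε, hball⟩ := Metric.mem_nhdsWithin_iff.1 hev
  have hpos : ∀ s, 0 ≤ s → t - ε / 2 ≤ s → s ≤ t + ε / 2 → 0 < w s := fun s hs h1 h2 =>
    hball ⟨by rw [Metric.mem_ball, Real.dist_eq, abs_lt]; constructor <;> linarith, hs⟩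
  refine ⟨Set.Ioc (t - ε / 2) (t + ε / 2),
    mem_nhdsWithin_of_mem_nhds (Ioc_mem_nhds (by linarith) (by linarith)), ?_⟩
  have hb : 0 ≤ t + ε / 2 := by linarith
  rcases le_or_gt 0 (t - ε / 2) with h0 | h0
  · rw [lsMeasure_Ioc hm hc h0 (by linarith),
      h _ _ h0 (by linarith) fun s h1 h2 => hpos s (h0.trans h1) h1 h2]
    simp
  · rw [lsMeasure, dif_pos hm, StieltjesFunction.measure_Ioc, hneg _ h0,
      Monotone.stieltjesFunction_eq,
      ContinuousWithinAt.rightLim_eq ((hc _ hb).mono (Set.Ici_subset_Ici.2 hb)),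
      h 0 _ le_rfl hb fun s h1 h2 => hpos s h1 (by linarith) h2, hu0 0 le_rfl]
    simp

lemma reg_le {l : ℝ} {w w' u u' x x' : ℝ → ℝ} {t K : ℝ} (ht : 0 ≤ t) (hl : 0 < l) (hK : 0 ≤ K)
    (hu : ContinuousOn u (Set.Ici 0)) (hu' : ContinuousOn u' (Set.Ici 0)) (hm' : Monotone u')
    (hu0 : u 0 = 0) (hu0' : u' 0 = 0)
    (hw : ∀ s, 0 ≤ s → w s = x s + l * u s) (hw' : ∀ s, 0 ≤ s → w' s = x' s + l * u' s)
    (hx : ∀ s, 0 ≤ s → s ≤ t → |x s - x' s| ≤ K) (hpos : ∀ s, 0 ≤ s → 0 ≤ w' s)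
    (flat : ∀ a b, 0 ≤ a → a ≤ b → (∀ s, a < s → s ≤ b → 0 < w s) → u b = u a) :
    l * (u t - u' t) ≤ K := by
  by_contra! hcon
  set S : Set ℝ := {s ∈ Set.Icc 0 t | l * (u s - u' s) ≤ K} with hS
  have hcl : IsClosed S := by
    refine IsClosed.isClosed_le (f := fun s => l * (u s - u' s)) (g := fun _ => K) isClosed_Icc ?_ ?_
    · exact (continuousOn_const.mul (hu.sub hu')).mono fun s hs => hs.1
    · exact continuousOn_const
  have hcomp : IsCompact S := isCompact_Icc.of_isClosed_subset hcl fun s hs => hs.1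
  have hne : S.Nonempty := ⟨0, ⟨le_rfl, ht⟩, by simp [hu0, hu0', hK]⟩
  obtain ⟨⟨ha0, hat⟩, haK⟩ := hcomp.sSup_mem hne
  set a := sSup S
  have hgt : ∀ s, a < s → s ≤ t → 0 < w s := fun s has hst => by
    have hs0 : 0 ≤ s := ha0.trans has.le
    have : K < l * (u s - u' s) := by
      by_contra! hle
      exact absurd (le_csSup hcomp.bddAbove (show s ∈ S from ⟨⟨hs0, hst⟩, hle⟩)) (not_le.2 has)
    have h1 := (abs_le.1 (hx s hs0 hst)).1
    have h2 := hw s hs0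
    have h3 := hw' s hs0
    have h4 := hpos s hs0
    linarith
  have h1 := flat a t ha0 hat hgt
  have h2 := hm' hat
  have : l * (u t - u' t) ≤ l * (u a - u' a) := mul_le_mul_of_nonneg_left (by linarith) hl.le
  linarith

section uniq
variable {r : ℕ} {np : NetParams r} {Q : Mat r}

lemma int_cont {g : ℝ → ℝ} (hg : ContinuousOn g (Set.Ici 0)) :
    ContinuousOn (fun t => ∫ s in (0:ℝ)..t, g s) (Set.Ici 0) := by
  intro t ht
  have ht : (0:ℝ) ≤ t := ht
  have h1 : ContinuousOn (fun t => ∫ s in (0:ℝ)..t, g s) (Set.uIcc 0 (t+1)) :=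
    intervalIntegral.continuousOn_primitive_interval
      ((hg.mono (by rw [Set.uIcc_of_le (by linarith)]; exact fun s hs => hs.1)).integrableOn_compact
        isCompact_uIcc)
  rw [Set.uIcc_of_le (by linarith)] at h1
  refine (h1 t ⟨ht, by linarith⟩).mono_of_mem_nhdsWithin ?_
  have : Set.Icc 0 (t+1) = Set.Ici 0 ∩ Set.Iic (t+1) := rfl
  rw [this]
  exact Filter.inter_mem self_mem_nhdsWithin
    (mem_nhdsWithin_of_mem_nhds (Iic_mem_nhds (by linarith)))

noncomputable def inflow (np : NetParams r) (Q : Mat r) (e f : ℝ → Mat r) (i : Fin r) (t : ℝ) : ℝ :=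
  (∑ j ∈ Finset.univ.filter (fun j => j ≠ i), np.mu j i * ∫ s in (0:ℝ)..t, e s j i)
      + Q i i * ∑ j, np.mu j i * ∫ s in (0:ℝ)..t, f s j i

lemma inflow_cont {e f : ℝ → Mat r} {u : ℝ → Fin r → ℝ} (h : IsFluidSol np Q e f u) (i : Fin r) :
    ContinuousOn (inflow np Q e f i) (Set.Ici 0) := by
  unfold inflow
  refine ContinuousOn.add ?_ ?_
  · exact continuousOn_finsetSum _ fun j _ => continuousOn_const.mul (int_cont (h.cont_e j i))
  · exact continuousOn_const.mul
      (continuousOn_finsetSum _ fun j _ => continuousOn_const.mul (int_cont (h.cont_f j i)))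

lemma u_cont {e f : ℝ → Mat r} {u : ℝ → Fin r → ℝ} (h : IsFluidSol np Q e f u) (i : Fin r) :
    ContinuousOn (fun t => u t i) (Set.Ici 0) := by
  have hl := np.lam_pos i
  have : ContinuousOn (fun t => (e t i i - e 0 i i + np.lam i * t - inflow np Q e f i t) / np.lam i)
      (Set.Ici 0) := by
    refine ContinuousOn.div_const ?_ _
    refine ContinuousOn.sub ?_ (inflow_cont h i)
    exact ((h.cont_e i i).sub continuousOn_const).add (by fun_prop)
  refine this.congr fun t ht => ?_
  have := h.eq_e_diag i t ht
  rw [add_assoc] at this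
  change e t i i = _ + inflow np Q e f i t at this
  rw [eq_div_iff hl.ne']
  linarith

lemma sum_bound {S : Finset (Fin r)} {c a : Fin r → ℝ} {K : ℝ} (hK : 0 ≤ K)
    (hc : ∀ i, 0 ≤ c i) (h : ∀ i, |a i| ≤ K) : |∑ i ∈ S, c i * a i| ≤ (∑ i, c i) * K := by
  refine (Finset.abs_sum_le_sum_abs _ _).trans ?_
  rw [Finset.sum_mul]
  refine (Finset.sum_le_sum (g := fun i => c i * K) fun i _ => ?_).trans
    (Finset.sum_le_sum_of_subset_of_nonneg (Finset.subset_univ S)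
      fun i _ _ => mul_nonneg (hc i) hK)
  rw [abs_mul, abs_of_nonneg (hc i)]
  exact mul_le_mul_of_nonneg_left (h i) (hc i)

lemma uniq_step (hQ : IsRouting Q) {e f e' f' : ℝ → Mat r} {u u' : ℝ → Fin r → ℝ}
    (h : IsFluidSol np Q e f u) (h' : IsFluidSol np Q e' f' u')
    (he0 : e 0 = e' 0) (hf0 : f 0 = f' 0) {t K : ℝ} (ht : 0 ≤ t) (hK : 0 ≤ K)
    (hE : ∀ s, 0 ≤ s → s ≤ t → ∀ i j,
      |(∫ x in (0:ℝ)..s, e x i j) - ∫ x in (0:ℝ)..s, e' x i j| ≤ K)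
    (hF : ∀ s, 0 ≤ s → s ≤ t → ∀ i j,
      |(∫ x in (0:ℝ)..s, f x i j) - ∫ x in (0:ℝ)..s, f' x i j| ≤ K) :
    (∀ i, np.lam i * |u t i - u' t i| ≤ (4 * (∑ i, ∑ j, np.mu i j) + 1) * K) ∧
    (∀ i j, |e t i j - e' t i j| ≤ (4 * (∑ i, ∑ j, np.mu i j) + 1) * K) ∧
    (∀ i j, |f t i j - f' t i j| ≤ (4 * (∑ i, ∑ j, np.mu i j) + 1) * K) := by
  set m := ∑ i, ∑ j, np.mu i j with hm
  have hcol : ∀ i, ∑ j, np.mu j i ≤ m := fun i => by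
    rw [hm, Finset.sum_comm]
    exact Finset.single_le_sum (f := fun i => ∑ j, np.mu j i)
      (fun i _ => Finset.sum_nonneg fun j _ => (np.mu_pos j i).le) (Finset.mem_univ i)
  have hmu : ∀ i j, np.mu i j ≤ m := fun i j =>
    (Finset.single_le_sum (f := fun k => np.mu k j) (fun k _ => (np.mu_pos k j).le)
      (Finset.mem_univ i)).trans (hcol j)
  have hm0 : 0 ≤ m := Finset.sum_nonneg fun i _ => Finset.sum_nonneg fun j _ => (np.mu_pos i j).le
  have hmK : 0 ≤ m * K := mul_nonneg hm0 hK
  have hQ1 : ∀ i j, Q i j ≤ 1 := fun i j => by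
    rw [← hQ.2 i]; exact Finset.single_le_sum (fun k _ => hQ.1 i k) (Finset.mem_univ j)
  have hP1 : ∀ i j, np.P i j ≤ 1 := fun i j => by
    rw [← np.P_rowsum i]
    exact Finset.single_le_sum (fun k _ => np.P_nonneg i k) (Finset.mem_univ j)
  -- sums of F
  have hFs : ∀ s, 0 ≤ s → s ≤ t → ∀ i j,
      |Q i j * (∑ k, np.mu k i * ∫ x in (0:ℝ)..s, f x k i)
        - Q i j * ∑ k, np.mu k i * ∫ x in (0:ℝ)..s, f' x k i| ≤ m * K := by
    intro s hs hst i j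
    rw [← mul_sub, ← Finset.sum_sub_distrib, abs_mul, abs_of_nonneg (hQ.1 i j)]
    simp_rw [← mul_sub]
    have h1 := sum_bound (S := Finset.univ) (c := fun k => np.mu k i) hK
      (fun k => (np.mu_pos k i).le) (fun k => hF s hs hst k i)
    have h2 := mul_le_mul_of_nonneg_right (hcol i) hK
    calc _ ≤ 1 * _ := mul_le_mul_of_nonneg_right (hQ1 i j) (abs_nonneg _)
      _ ≤ m * K := by linarith
  have hA : ∀ s, 0 ≤ s → s ≤ t → ∀ i,
      |inflow np Q e f i s - inflow np Q e' f' i s| ≤ 2 * (m * K) := by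
    intro s hs hst i
    have h1 := hFs s hs hst i i
    have h2 := sum_bound (S := Finset.univ.filter (fun j => j ≠ i)) (c := fun k => np.mu k i) hK
      (fun k => (np.mu_pos k i).le) (fun k => hE s hs hst k i)
    simp_rw [mul_sub] at h2
    rw [Finset.sum_sub_distrib] at h2
    have h3 := mul_le_mul_of_nonneg_right (hcol i) hK
    unfold inflow
    rw [add_sub_add_comm]
    exact (abs_add_le _ _).trans (by linarith)
  have hd : ∀ i s, 0 ≤ s → e s i i =
      (e 0 i i - np.lam i * s + inflow np Q e f i s) + np.lam i * u s i := fun i s hs => by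
    have := h.eq_e_diag i s hs
    rw [add_assoc] at this
    change e s i i = _ + inflow np Q e f i s at this
    linarith
  have hd' : ∀ i s, 0 ≤ s → e' s i i =
      (e 0 i i - np.lam i * s + inflow np Q e' f' i s) + np.lam i * u' s i := fun i s hs => by
    have := h'.eq_e_diag i s hs
    rw [add_assoc, ← he0] at this
    change e' s i i = _ + inflow np Q e' f' i s at this
    linarith
  have hU : ∀ i, np.lam i * |u t i - u' t i| ≤ 2 * (m * K) := by
    intro i
    have h1 := reg_le ht (np.lam_pos i) (K := 2 * (m * K)) (by linarith) (u_cont h i) (u_cont h' i)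
      (h'.u_mono i) (h.u_zero i 0 le_rfl) (h'.u_zero i 0 le_rfl) (hd i) (hd' i)
      (fun s hs hst => by simpa using hA s hs hst i)
      (fun s hs => ((h'.mem_T s hs).1 i i).1)
      (fun a b ha hab hh => flat_of_compl (h.u_mono i) (u_cont h i) (h.cont_e i i) (h.compl i)
        ha hab hh)
    have h2 := reg_le ht (np.lam_pos i) (K := 2 * (m * K)) (by linarith) (u_cont h' i) (u_cont h i)
      (h.u_mono i) (h'.u_zero i 0 le_rfl) (h.u_zero i 0 le_rfl) (hd' i) (hd i)
      (fun s hs hst => by rw [abs_sub_comm]; simpa using hA s hs hst i)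
      (fun s hs => ((h.mem_T s hs).1 i i).1)
      (fun a b ha hab hh => flat_of_compl (h'.u_mono i) (u_cont h' i) (h'.cont_e i i) (h'.compl i)
        ha hab hh)
    have h3 : np.lam i * |u t i - u' t i| = |np.lam i * (u t i - u' t i)| := by
      rw [abs_mul, abs_of_pos (np.lam_pos i)]
    rw [h3, abs_le]
    constructor <;> linarith
  have hmuI : ∀ i j (a : ℝ), |a| ≤ K → |np.mu i j * a| ≤ m * K := fun i j a ha => by
    rw [abs_mul, abs_of_pos (np.mu_pos i j)]
    exact mul_le_mul (hmu i j) ha (abs_nonneg _) hm0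
  refine ⟨fun i => by linarith [hU i], fun i j => ?_, fun i j => ?_⟩
  · by_cases hij : i = j
    · subst hij
      have h1 := hA t ht le_rfl i
      have h2 := hU i
      have h3 : np.lam i * |u t i - u' t i| = |np.lam i * (u t i - u' t i)| := by
        rw [abs_mul, abs_of_pos (np.lam_pos i)]
      rw [h3] at h2
      clear h3
      rw [hd i t ht, hd' i t ht]
      rw [abs_le] at *
      constructor <;> linarith
    · have h1 := hmuI i j _ (hE t ht le_rfl i j)
      have h2 := hFs t ht le_rfl i j
      rw [h.eq_e_off i j hij t ht, h'.eq_e_off i j hij t ht, he0]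
      rw [abs_le] at *
      constructor <;> linarith
  · have h1 := hmuI i j _ (hF t ht le_rfl i j)
    have h2 := hU i
    have h3 : |np.P i j * (np.lam i * (u t i - u' t i))| ≤ 2 * (m * K) := by
      rw [abs_mul, abs_mul, abs_of_pos (np.lam_pos i), abs_of_nonneg (np.P_nonneg i j)]
      have := mul_le_mul_of_nonneg_right (hP1 i j)
        (mul_nonneg (np.lam_pos i).le (abs_nonneg (u t i - u' t i)))
      linarith
    rw [h.eq_f i j t ht, h'.eq_f i j t ht, hf0]
    rw [abs_le] at *
    constructor <;> linarith

lemma int_bound {g g' : ℝ → ℝ} (hg : ContinuousOn g (Set.Ici 0)) (hg' : ContinuousOn g' (Set.Ici 0))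
    {c b t : ℝ} (ht : 0 ≤ t) (hc : 0 ≤ c)
    (h : ∀ s, 0 ≤ s → |g s - g' s| ≤ b * (c * Real.exp (b * s))) :
    |(∫ x in (0:ℝ)..t, g x) - ∫ x in (0:ℝ)..t, g' x| ≤ c * Real.exp (b * t) := by
  have hi : ∀ {k : ℝ → ℝ}, ContinuousOn k (Set.Ici 0) → IntervalIntegrable k volume 0 t :=
    fun hk => (hk.mono (by rw [Set.uIcc_of_le ht]; exact fun s hs => hs.1)).intervalIntegrable
  rw [← intervalIntegral.integral_sub (hi hg) (hi hg')]
  have hd : ∀ x ∈ Set.uIcc 0 t, HasDerivAt (fun s => c * Real.exp (b * s))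
      (b * (c * Real.exp (b * x))) x := fun x _ => by
    have : HasDerivAt (fun s => Real.exp (b * s)) (Real.exp (b * x) * (b * 1)) x :=
      ((hasDerivAt_id x).const_mul b).exp
    exact (this.const_mul c).congr_deriv (by ring)
  have hgi : IntervalIntegrable (fun x => b * (c * Real.exp (b * x))) volume 0 t :=
    Continuous.intervalIntegrable (by fun_prop) _ _
  have := intervalIntegral.norm_integral_le_of_norm_le ht (f := fun x => g x - g' x)
    (Filter.Eventually.of_forall fun s hs => h s hs.1.le) hgi
  rw [intervalIntegral.integral_eq_sub_of_hasDerivAt hd hgi, Real.norm_eq_abs] at this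
  simp only [mul_zero, Real.exp_zero] at this
  linarith

lemma uniq (hQ : IsRouting Q) {e f e' f' : ℝ → Mat r} {u u' : ℝ → Fin r → ℝ}
    (h : IsFluidSol np Q e f u) (h' : IsFluidSol np Q e' f' u')
    (he0 : e 0 = e' 0) (hf0 : f 0 = f' 0) {t : ℝ} (ht : 0 ≤ t) :
    e t = e' t ∧ f t = f' t ∧ u t = u' t := by
  set C := 4 * (∑ i, ∑ j, np.mu i j) + 1 with hC
  have hm0 : 0 ≤ ∑ i, ∑ j, np.mu i j :=
    Finset.sum_nonneg fun i _ => Finset.sum_nonneg fun j _ => (np.mu_pos i j).le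
  have hC1 : 1 ≤ C := by linarith
  have hexp : ∀ s t : ℝ, s ≤ t → ∀ c, 0 ≤ c →
      c * Real.exp (2 * C * s) ≤ c * Real.exp (2 * C * t) := fun s t hst c hc => by
    refine mul_le_mul_of_nonneg_left (Real.exp_le_exp.2 ?_) hc
    exact mul_le_mul_of_nonneg_left hst (by linarith)
  have claim : ∀ n : ℕ, ∀ s, 0 ≤ s → ∀ i j,
      |(∫ x in (0:ℝ)..s, e x i j) - ∫ x in (0:ℝ)..s, e' x i j|
        ≤ (1/2)^n * Real.exp (2 * C * s) ∧
      |(∫ x in (0:ℝ)..s, f x i j) - ∫ x in (0:ℝ)..s, f' x i j|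
        ≤ (1/2)^n * Real.exp (2 * C * s) := by
    intro n
    induction n with
    | zero =>
      intro s hs i j
      have h1 : ∀ s, 0 ≤ s → 1 ≤ 2 * C * ((1/2)^0 * Real.exp (2 * C * s)) := fun s hs => by
        have : 1 ≤ Real.exp (2 * C * s) := Real.one_le_exp (by positivity)
        nlinarith
      constructor
      · refine int_bound (h.cont_e i j) (h'.cont_e i j) hs (by positivity) fun s hs => ?_
        refine le_trans ?_ (h1 s hs)
        have h2 := (h.mem_T s hs).1 i j
        have h3 := (h'.mem_T s hs).1 i j
        rw [abs_le]; constructor <;> linarith [h2.1, h2.2, h3.1, h3.2]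
      · refine int_bound (h.cont_f i j) (h'.cont_f i j) hs (by positivity) fun s hs => ?_
        refine le_trans ?_ (h1 s hs)
        have h2 := (h.mem_T s hs).2.1 i j
        have h3 := (h'.mem_T s hs).2.1 i j
        rw [abs_le]; constructor <;> linarith [h2.1, h2.2, h3.1, h3.2]
    | succ n ih =>
      have hstep := fun (t : ℝ) (ht : 0 ≤ t) => uniq_step hQ h h' he0 hf0 ht
        (K := (1/2)^n * Real.exp (2 * C * t)) (by positivity)
        (fun s hs hst i j => ((ih s hs i j).1).trans (hexp s t hst _ (by positivity)))
        (fun s hs hst i j => ((ih s hs i j).2).trans (hexp s t hst _ (by positivity)))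
      intro s hs i j
      constructor
      · refine int_bound (h.cont_e i j) (h'.cont_e i j) hs (by positivity) fun s hs => ?_
        refine ((hstep s hs).2.1 i j).trans (le_of_eq ?_)
        rw [← hC]; ring
      · refine int_bound (h.cont_f i j) (h'.cont_f i j) hs (by positivity) fun s hs => ?_
        refine ((hstep s hs).2.2 i j).trans (le_of_eq ?_)
        rw [← hC]; ring
  have hz : ∀ s, 0 ≤ s → ∀ a : ℝ, (∀ n : ℕ, a ≤ (1/2)^n * Real.exp (2 * C * s)) → a ≤ 0 := by
    intro s hs a ha
    have : Tendsto (fun n : ℕ => (1/2 : ℝ)^n * Real.exp (2 * C * s)) atTop (𝓝 (0 * Real.exp (2 * C * s))) :=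
      (tendsto_pow_atTop_nhds_zero_of_lt_one (by norm_num) (by norm_num)).mul_const _
    rw [zero_mul] at this
    exact ge_of_tendsto' this ha
  obtain ⟨hu, he, hf⟩ := uniq_step hQ h h' he0 hf0 ht le_rfl
    (fun s hs hst i j => hz s hs _ fun n => (claim n s hs i j).1)
    (fun s hs hst i j => hz s hs _ fun n => (claim n s hs i j).2)
  simp only [mul_zero] at hu he hf
  refine ⟨?_, ?_, ?_⟩
  · funext i j; exact sub_eq_zero.1 (abs_nonpos_iff.1 (he i j))
  · funext i j; exact sub_eq_zero.1 (abs_nonpos_iff.1 (hf i j))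
  · funext i
    have h1 := hu i
    have h2 : |u t i - u' t i| ≤ 0 := by
      by_contra! hc
      exact absurd (mul_pos (np.lam_pos i) hc) (not_lt.2 h1)
    exact sub_eq_zero.1 (abs_nonpos_iff.1 h2)

end uniq

section exist
variable {r : ℕ}

/-- Admissible cumulative departure processes. -/
def Adm (np : NetParams r) (D : Fin r × ℝ → ℝ) : Prop :=
  ∀ i, (∀ t ≤ (0:ℝ), D (i, t) = 0) ∧
    ∀ s t, s ≤ t → D (i, s) ≤ D (i, t) ∧ D (i, t) ≤ D (i, s) + np.lam i * (t - s)

/-- Cumulative full-car arrivals. -/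
noncomputable def cF (np : NetParams r) (f0 : Mat r) (D : Fin r × ℝ → ℝ) (i j : Fin r) : ℝ → ℝ :=
  filt (np.mu i j) (fun s => f0 i j + np.P i j * D (i, s))

/-- Input of empty cars. -/
noncomputable def cH (np : NetParams r) (Q e0 f0 : Mat r) (D : Fin r × ℝ → ℝ) (i j : Fin r)
    (s : ℝ) : ℝ :=
  e0 i j + Q i j * ∑ k, cF np f0 D k i s

/-- Cumulative empty-car arrivals. -/
noncomputable def cG (np : NetParams r) (Q e0 f0 : Mat r) (D : Fin r × ℝ → ℝ) (i j : Fin r) :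
    ℝ → ℝ :=
  filt (np.mu i j) (cH np Q e0 f0 D i j)

/-- Initial stock plus cumulative arrivals at station `i`. -/
noncomputable def cX (np : NetParams r) (Q e0 f0 : Mat r) (D : Fin r × ℝ → ℝ) (i : Fin r)
    (t : ℝ) : ℝ :=
  cH np Q e0 f0 D i i t + ∑ j ∈ Finset.univ.filter (fun j => j ≠ i), cG np Q e0 f0 D j i t

/-- The fixed point operator. -/
noncomputable def cPhi (np : NetParams r) (Q e0 f0 : Mat r) (D : Fin r × ℝ → ℝ)
    (p : Fin r × ℝ) : ℝ :=
  np.lam p.1 * max p.2 0 - regU (np.lam p.1) (cX np Q e0 f0 D p.1) (max p.2 0)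

variable {np : NetParams r} {Q e0 f0 : Mat r} {D E : Fin r × ℝ → ℝ}

lemma Adm.cont (h : Adm np D) (i : Fin r) : Continuous fun t => D (i, t) := by
  refine (LipschitzWith.of_le_add_mul (⟨np.lam i, (np.lam_pos i).le⟩ : NNReal)
    (f := fun t => D (i, t)) fun x y => ?_).continuous
  change D (i, x) ≤ D (i, y) + np.lam i * dist x y
  rw [Real.dist_eq]
  have h1 : 0 ≤ np.lam i * |x - y| := mul_nonneg (np.lam_pos i).le (abs_nonneg _)
  rcases le_total x y with hxy | hxy
  · linarith [((h i).2 x y hxy).1]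
  · rw [abs_of_nonneg (by linarith)]
    exact ((h i).2 y x hxy).2

lemma Adm.nonneg (h : Adm np D) (i : Fin r) (t : ℝ) : 0 ≤ D (i, t) := by
  rcases le_total t 0 with ht | ht
  · rw [(h i).1 t ht]
  · have := ((h i).2 0 t ht).1
    rwa [(h i).1 0 le_rfl] at this

lemma Adm.le (h : Adm np D) (i : Fin r) (t : ℝ) : D (i, t) ≤ np.lam i * max t 0 := by
  rcases le_total t 0 with ht | ht
  · rw [(h i).1 t ht, max_eq_right ht, mul_zero]
  · have := ((h i).2 0 t ht).2
    rw [(h i).1 0 le_rfl] at this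
    rw [max_eq_left ht]; linarith

lemma cFH_cont (h : Adm np D) (i j : Fin r) :
    Continuous fun s => f0 i j + np.P i j * D (i, s) :=
  continuous_const.add (continuous_const.mul (h.cont i))

lemma cFH_nonneg (h : Adm np D) (h0 : MemT e0 f0) (i j : Fin r) (s : ℝ) :
    0 ≤ f0 i j + np.P i j * D (i, s) :=
  add_nonneg (h0.2.1 i j).1 (mul_nonneg (np.P_nonneg i j) (h.nonneg i s))

lemma cFH_mono (h : Adm np D) (i j : Fin r) :
    MonotoneOn (fun s => f0 i j + np.P i j * D (i, s)) (Set.Ici 0) := fun s _ t _ hst => by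
  have := mul_le_mul_of_nonneg_left ((h i).2 s t hst).1 (np.P_nonneg i j)
  simpa using this

lemma cF_cont (h : Adm np D) (i j : Fin r) : Continuous (cF np f0 D i j) :=
  filt_continuous _ (cFH_cont h i j)

lemma cF_nonneg (h : Adm np D) (h0 : MemT e0 f0) (i j : Fin r) {t : ℝ} (ht : 0 ≤ t) :
    0 ≤ cF np f0 D i j t :=
  filt_nonneg (np.mu_pos i j) (cFH_cont h i j) ht fun s _ => cFH_nonneg h h0 i j s

lemma cF_mono (h : Adm np D) (h0 : MemT e0 f0) (i j : Fin r) :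
    MonotoneOn (cF np f0 D i j) (Set.Ici 0) :=
  filt_monotoneOn (np.mu_pos i j) (cFH_cont h i j) (fun s _ => cFH_nonneg h h0 i j s)
    (cFH_mono h i j)

lemma cH_cont (h : Adm np D) (i j : Fin r) : Continuous (cH np Q e0 f0 D i j) := by
  unfold cH
  exact continuous_const.add (continuous_const.mul
    (continuous_finsetSum _ fun k _ => cF_cont h k i))

lemma cH_nonneg (hQ : IsRouting Q) (h : Adm np D) (h0 : MemT e0 f0) (i j : Fin r) {t : ℝ}
    (ht : 0 ≤ t) : 0 ≤ cH np Q e0 f0 D i j t :=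
  add_nonneg (h0.1 i j).1 (mul_nonneg (hQ.1 i j)
    (Finset.sum_nonneg fun k _ => cF_nonneg h h0 k i ht))

lemma cH_mono (hQ : IsRouting Q) (h : Adm np D) (h0 : MemT e0 f0) (i j : Fin r) :
    MonotoneOn (cH np Q e0 f0 D i j) (Set.Ici 0) := fun s hs t ht hst => by
  refine add_le_add le_rfl (mul_le_mul_of_nonneg_left ?_ (hQ.1 i j))
  exact Finset.sum_le_sum fun k _ => cF_mono h h0 k i hs ht hst

lemma cG_cont (h : Adm np D) (i j : Fin r) : Continuous (cG np Q e0 f0 D i j) :=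
  filt_continuous _ (cH_cont h i j)

lemma cX_cont (h : Adm np D) (i : Fin r) : Continuous (cX np Q e0 f0 D i) := by
  unfold cX
  exact (cH_cont h i i).add (continuous_finsetSum _ fun k _ => cG_cont h k i)

lemma cX_mono (hQ : IsRouting Q) (h : Adm np D) (h0 : MemT e0 f0) (i : Fin r) :
    MonotoneOn (cX np Q e0 f0 D i) (Set.Ici 0) := fun s hs t ht hst => by
  refine add_le_add (cH_mono hQ h h0 i i hs ht hst) (Finset.sum_le_sum fun k _ => ?_)
  exact filt_monotoneOn (np.mu_pos k i) (cH_cont h k i) (fun s hs => cH_nonneg hQ h h0 k i hs)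
    (cH_mono hQ h h0 k i) hs ht hst

lemma cX_zero (i : Fin r) : cX np Q e0 f0 D i 0 = e0 i i := by
  simp [cX, cH, cG, cF, filt_zero]

lemma cH_le (hQ : IsRouting Q) (hD : Adm np D) (hE : Adm np E) (h : D ≤ E) (i j : Fin r) {t : ℝ}
    (ht : 0 ≤ t) : cH np Q e0 f0 D i j t ≤ cH np Q e0 f0 E i j t := by
  refine add_le_add le_rfl (mul_le_mul_of_nonneg_left ?_ (hQ.1 i j))
  refine Finset.sum_le_sum fun k _ => ?_
  refine filt_mono (np.mu_pos k i) (cFH_cont hD k i) (cFH_cont hE k i) ht fun s _ _ => ?_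
  exact add_le_add le_rfl (mul_le_mul_of_nonneg_left (h _) (np.P_nonneg k i))

lemma cX_le (hQ : IsRouting Q) (hD : Adm np D) (hE : Adm np E) (h : D ≤ E) (i : Fin r) {t : ℝ}
    (ht : 0 ≤ t) : cX np Q e0 f0 D i t ≤ cX np Q e0 f0 E i t := by
  refine add_le_add (cH_le hQ hD hE h i i ht) (Finset.sum_le_sum fun k _ => ?_)
  exact filt_mono (np.mu_pos k i) (cH_cont hD k i) (cH_cont hE k i) ht
    fun s hs _ => cH_le hQ hD hE h k i hs

lemma cPhi_adm (hQ : IsRouting Q) (h0 : MemT e0 f0) (h : Adm np D) :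
    Adm np (cPhi np Q e0 f0 D) := by
  intro i
  have hc := cX_cont (Q := Q) (e0 := e0) (f0 := f0) h i
  have hm := cX_mono hQ h h0 i
  have hz : (0:ℝ) ≤ cX np Q e0 f0 D i 0 := by rw [cX_zero]; exact (h0.1 i i).1
  refine ⟨fun t ht => ?_, fun s t hst => ?_⟩
  · simp only [cPhi]
    rw [max_eq_right ht, regU_zero hc hz]; simp
  · simp only [cPhi]
    have h1 : max s 0 ≤ max t 0 := max_le_max hst le_rfl
    have h2 := regU_mono (l := np.lam i) hc (le_max_right s 0) h1
    have h3 := regU_lip (np.lam_pos i) hc hm (le_max_right s 0) h1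
    have h4 : max t 0 - max s 0 ≤ t - s := by
      have := abs_max_sub_max_le_abs t s 0
      rw [abs_of_nonneg (by linarith), abs_of_nonneg (by linarith)] at this
      exact this
    have h5 := mul_le_mul_of_nonneg_left h4 (np.lam_pos i).le
    constructor <;> linarith

lemma exists_fix (hQ : IsRouting Q) (h0 : MemT e0 f0) :
    ∃ D, Adm np D ∧ cPhi np Q e0 f0 D = D := by
  refine knaster (Adm np) (cPhi np Q e0 f0) (fun D hD => cPhi_adm hQ h0 hD) ?_ (fun _ => 0) ?_ ?_
    (fun p => np.lam p.1 * max p.2 0) ?_ ?_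
  · intro D E hD hE hDE p
    have := regU_anti (l := np.lam p.1) (cX_cont (Q := Q) (e0 := e0) (f0 := f0) hD p.1)
      (cX_cont (Q := Q) (e0 := e0) (f0 := f0) hE p.1) (le_max_right p.2 0)
      fun s hs _ => cX_le hQ hD hE hDE p.1 hs
    simp only [cPhi]
    linarith
  · intro i
    refine ⟨fun _ _ => rfl, fun s t hst => ⟨le_rfl, ?_⟩⟩
    have := mul_nonneg (np.lam_pos i).le (sub_nonneg.2 hst)
    linarith
  · exact fun D hD p => hD.nonneg p.1 p.2
  · exact fun D hD p => hD.le p.1 p.2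
  · intro 𝒜 hne hA i
    have hb : ∀ t, BddAbove ((fun D : Fin r × ℝ → ℝ => D (i, t)) '' 𝒜) := fun t =>
      ⟨np.lam i * max t 0, by rintro _ ⟨E, hE, rfl⟩; exact (hA E hE).le i t⟩
    refine ⟨fun t ht => ?_, fun s t hst => ⟨?_, ?_⟩⟩
    · have : (fun D : Fin r × ℝ → ℝ => D (i, t)) '' 𝒜 = {0} := by
        ext y
        constructor
        · rintro ⟨E, hE, rfl⟩; exact (hA E hE i).1 t ht
        · rintro rfl
          obtain ⟨E, hE⟩ := hne
          exact ⟨E, hE, (hA E hE i).1 t ht⟩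
      simp only [this, csSup_singleton]
    · refine csSup_le (hne.image _) ?_
      rintro _ ⟨E, hE, rfl⟩
      exact ((hA E hE i).2 s t hst).1.trans (le_csSup (hb t) ⟨E, hE, rfl⟩)
    · refine csSup_le (hne.image _) ?_
      rintro _ ⟨E, hE, rfl⟩
      have h1 := le_csSup (hb s) ⟨E, hE, rfl⟩
      have h2 := ((hA E hE i).2 s t hst).2
      simp only at h1 ⊢
      linarith

open scoped Classical in
lemma exists_sol (hQ : IsRouting Q) (h0 : MemT e0 f0) :
    ∃ (e f : ℝ → Mat r) (u : ℝ → Fin r → ℝ), IsFluidSol np Q e f u ∧ e 0 = e0 ∧ f 0 = f0 := by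
  obtain ⟨D, hD, hfix⟩ := exists_fix (np := np) hQ h0
  set F := cF np f0 D with hF
  set H := cH np Q e0 f0 D with hH
  set G := cG np Q e0 f0 D with hG
  set X := cX np Q e0 f0 D with hX
  set f : ℝ → Mat r := fun t i j => (f0 i j + np.P i j * D (i, t)) - F i j t with hf
  set e : ℝ → Mat r := fun t i j => if i = j then X i t - D (i, t) else H i j t - G i j t with he
  set u : ℝ → Fin r → ℝ := fun t i => max t 0 - D (i, t) / np.lam i with hu
  have hlu : ∀ t i, np.lam i * u t i = np.lam i * max t 0 - D (i, t) := fun t i => by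
    have := (np.lam_pos i).ne'
    simp only [hu]; field_simp
  have hreg : ∀ i t, 0 ≤ t → np.lam i * u t i = regU (np.lam i) (X i) t := fun i t ht => by
    have := congrFun hfix (i, t)
    simp only [cPhi] at this
    rw [hlu, ← this, max_eq_left ht]
    ring
  have hXc : ∀ i, Continuous (X i) := fun i => cX_cont hD i
  have hdiag : ∀ i t, e t i i = X i t - D (i, t) := fun i t => by simp [he]
  have hoff : ∀ i j, i ≠ j → ∀ t, e t i j = H i j t - G i j t := fun i j hij t => by
    simp [he, hij]
  have hec : ∀ i j, Continuous fun t => e t i j := fun i j => by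
    by_cases hij : i = j
    · subst hij
      simp only [hdiag]
      exact (hXc i).sub (hD.cont i)
    · simp only [hoff i j hij]
      exact (cH_cont hD i j).sub (cG_cont hD i j)
  have hfc : ∀ i j, Continuous fun t => f t i j := fun i j =>
    (cFH_cont hD i j).sub (cF_cont hD i j)
  have hFint : ∀ i j t, np.mu i j * ∫ s in (0:ℝ)..t, f s i j = F i j t := fun i j t =>
    filt_integral _ (cFH_cont hD i j) t
  have hGint : ∀ i j, i ≠ j → ∀ t, np.mu i j * ∫ s in (0:ℝ)..t, e s i j = G i j t :=
    fun i j hij t => by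
      simp only [hoff i j hij]
      exact filt_integral _ (cH_cont hD i j) t
  have hf00 : f 0 = f0 := by
    funext i j
    simp [hf, hF, cF, filt_zero, (hD i).1 0 le_rfl]
  have he00 : e 0 = e0 := by
    funext i j
    by_cases hij : i = j
    · subst hij
      rw [hdiag, hX, cX_zero, (hD i).1 0 le_rfl, sub_zero]
    · rw [hoff i j hij]
      simp [hH, hG, cH, cG, cF, filt_zero]
  have hum : ∀ i, Monotone fun t => u t i := fun i s t hst => by
    have h1 : np.lam i * u s i ≤ np.lam i * u t i := by
      rw [hlu, hlu]
      rcases le_total t 0 with ht | ht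
      · rw [(hD i).1 t ht, (hD i).1 s (hst.trans ht), max_eq_right ht, max_eq_right (hst.trans ht)]
      · rcases le_total s 0 with hs | hs
        · rw [(hD i).1 s hs, max_eq_right hs]
          linarith [hD.le i t]
        · rw [max_eq_left hs, max_eq_left ht]
          linarith [((hD i).2 s t hst).2]
    exact le_of_mul_le_mul_left h1 (np.lam_pos i)
  have hu0 : ∀ i, ∀ t ≤ (0:ℝ), u t i = 0 := fun i t ht => by
    simp [hu, (hD i).1 t ht, max_eq_right ht]
  have hunn : ∀ t i, 0 ≤ u t i := fun t i => by
    rcases le_total t 0 with ht | ht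
    · rw [hu0 i t ht]
    · have := hum i ht
      simp only [hu0 i 0 le_rfl] at this
      exact this
  have huc : ∀ i, Continuous fun t => u t i := fun i =>
    (continuous_id.max continuous_const).sub ((hD.cont i).div_const _)
  have hdu : ∀ i t, 0 ≤ t → D (i, t) = np.lam i * (t - u t i) := fun i t ht => by
    have := hlu t i
    rw [max_eq_left ht] at this
    linarith
  have hfnn : ∀ t, 0 ≤ t → ∀ i j, 0 ≤ f t i j := fun t ht i j =>
    sub_nonneg.2 (filt_le (np.mu_pos i j) (cFH_cont hD i j) ht
      (fun s _ => cFH_nonneg hD h0 i j s) (cFH_mono hD i j))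
  have henn : ∀ t, 0 ≤ t → ∀ i j, 0 ≤ e t i j := fun t ht i j => by
    by_cases hij : i = j
    · subst hij
      rw [hdiag]
      have h1 := (le_max_left _ _).trans (le_regU (l := np.lam i) (hXc i) ht le_rfl)
      rw [← hreg i t ht] at h1
      rw [hdu i t ht]
      linarith
    · rw [hoff i j hij]
      exact sub_nonneg.2 (filt_le (np.mu_pos i j) (cH_cont hD i j) ht
        (fun s hs => cH_nonneg hQ hD h0 i j hs) (cH_mono hQ hD h0 i j))
  have hsum : ∀ t, ∑ i, ∑ j, (e t i j + f t i j) = 1 := fun t => by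
    have hG' : ∑ i, ∑ j ∈ Finset.univ.filter (fun j => j ≠ i), G j i t
        = ∑ i, ∑ j, if i = j then 0 else G i j t := by
      rw [Finset.sum_comm' (t' := Finset.univ)
        (s' := fun j => Finset.univ.filter (fun i => j ≠ i)) (by simp)]
      refine Finset.sum_congr rfl fun i _ => ?_
      rw [Finset.sum_filter]
      refine Finset.sum_congr rfl fun j _ => ?_
      by_cases hij : i = j <;> simp [hij]
    have h1 : ∀ i j, e t i j = H i j t - (if i = j then 0 else G i j t)
        + if i = j then (∑ k ∈ Finset.univ.filter (fun k => k ≠ i), G k i t) - D (i, t) else 0 := by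
      intro i j
      by_cases hij : i = j
      · subst hij
        rw [hdiag]
        simp only [hX, cX, ← hH, ← hG, if_true]
        ring
      · rw [hoff i j hij]; simp [hij]
    have h2 : ∑ i, ∑ j, e t i j = (∑ i, ∑ j, H i j t) - ∑ i, D (i, t) := by
      simp only [h1, Finset.sum_add_distrib, Finset.sum_sub_distrib, Finset.sum_ite_eq,
        Finset.mem_univ, if_true, hG']
      ring
    have h3 : ∑ i, ∑ j, H i j t = (∑ i, ∑ j, e0 i j) + ∑ i, ∑ j, F i j t := by
      have : ∀ i, ∑ j, H i j t = (∑ j, e0 i j) + ∑ k, F k i t := fun i => by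
        simp only [hH, cH, Finset.sum_add_distrib, ← Finset.sum_mul, hQ.2 i, one_mul, hF]
      simp only [this, Finset.sum_add_distrib]
      rw [Finset.sum_comm (f := fun i k => F k i t)]
    have h4 : ∑ i, ∑ j, f t i j = (∑ i, ∑ j, f0 i j) + (∑ i, D (i, t)) - ∑ i, ∑ j, F i j t := by
      simp only [hf, Finset.sum_sub_distrib, Finset.sum_add_distrib, ← Finset.sum_mul,
        np.P_rowsum, one_mul]
    have h5 := h0.2.2
    simp only [Finset.sum_add_distrib] at h5 ⊢
    linarith
  have hle1 : ∀ t, 0 ≤ t → ∀ i j, e t i j + f t i j ≤ 1 := fun t ht i j => by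
    rw [← hsum t]
    refine le_trans ?_ (Finset.single_le_sum (f := fun i => ∑ j, (e t i j + f t i j))
      (fun i _ => Finset.sum_nonneg fun j _ => add_nonneg (henn t ht i j) (hfnn t ht i j))
      (Finset.mem_univ i))
    exact Finset.single_le_sum (f := fun j => (e t i j + f t i j))
      (fun j _ => add_nonneg (henn t ht i j) (hfnn t ht i j)) (Finset.mem_univ j)
  refine ⟨e, f, u, ?_, he00, hf00⟩
  refine
    { cont_e := fun i j => (hec i j).continuousOn
      cont_f := fun i j => (hfc i j).continuousOn
      mem_T := fun t ht => ⟨fun i j => ⟨henn t ht i j, ?_⟩, fun i j => ⟨hfnn t ht i j, ?_⟩, hsum t⟩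
      u_nonneg := hunn
      u_mono := hum
      u_zero := hu0
      eq_f := ?_
      eq_e_off := ?_
      eq_e_diag := ?_
      compl := ?_ }
  · linarith [hle1 t ht i j, hfnn t ht i j]
  · linarith [hle1 t ht i j, henn t ht i j]
  · intro i j t ht
    rw [hFint, hf00, mul_comm (np.lam i), mul_assoc, ← hdu i t ht]
  · intro i j hij t ht
    rw [hGint i j hij, he00, hoff i j hij]
    simp only [hFint]
    simp only [hH, cH, ← hF]
    ring
  · intro i t ht
    have h1 : ∑ j ∈ Finset.univ.filter (fun j => j ≠ i), np.mu j i * ∫ s in (0:ℝ)..t, e s j i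
        = ∑ j ∈ Finset.univ.filter (fun j => j ≠ i), G j i t :=
      Finset.sum_congr rfl fun j hj => hGint j i (Finset.mem_filter.1 hj).2 t
    rw [he00, hdiag, ← hdu i t ht]
    simp only [hFint]
    have h2 : X i t = e0 i i + Q i i * ∑ k, F k i t
        + ∑ j ∈ Finset.univ.filter (fun j => j ≠ i), G j i t := by
      simp only [hX, cX, cH, hF, hG]
    rw [h2]
    have h3 := h1
    convert_to _ = e0 i i - D (i, t) + (∑ j ∈ Finset.univ.filter (fun j => j ≠ i), np.mu j i * ∫ s in (0:ℝ)..t, e s j i) + Q i i * ∑ k, F k i t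
    rw [h3]
    ring
  · intro i
    refine compl_of_flat (hum i) (huc i).continuousOn (hu0 i) (hec i i).continuousOn ?_
    intro a b ha hab hpos
    have := regU_flat (l := np.lam i) (hXc i) ha hab fun s h1 h2 => by
      have h3 := hpos s h1 h2
      have hs : 0 ≤ s := ha.trans h1
      rw [hdiag, hdu i s hs] at h3
      rw [← hreg i s hs]
      linarith
    rw [← hreg i a ha, ← hreg i b (ha.trans hab)] at this
    exact mul_left_cancel₀ (np.lam_pos i).ne' this

end exist

/-- Theorem 3 (existence and uniqueness of the fluid model solution): for every
initial condition in 𝒯 there is exactly one fluid model solution. -/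
theorem stmt_9 {r : ℕ} (hr : 1 ≤ r) (np : NetParams r)
    (Q : Mat r) (hQ : IsRouting Q)
    (e0 f0 : Mat r) (h0 : MemT e0 f0) :
    ∃ (e f : ℝ → Mat r) (u : ℝ → Fin r → ℝ),
      IsFluidSol np Q e f u ∧ e 0 = e0 ∧ f 0 = f0 ∧
      ∀ (e' f' : ℝ → Mat r) (u' : ℝ → Fin r → ℝ),
        IsFluidSol np Q e' f' u' → e' 0 = e0 → f' 0 = f0 →
        ∀ t, 0 ≤ t → e' t = e t ∧ f' t = f t ∧ u' t = u t := by

  obtain ⟨e, f, u, h, he, hf⟩ := exists_sol (np := np) hQ h0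
  exact ⟨e, f, u, h, he, hf, fun e' f' u' h' he' hf' t ht =>
    uniq hQ h' h (he'.trans he.symm) (hf'.trans hf.symm) ht⟩
end

section
/- Assume P_{ij} > 0 for all i,j and Q_{ii} > 0 for all i. Let (e, f, u) be the fluid model solution with initial condition (e(0), f(0)) ∈ 𝒯. Then the trajectory converges to the equilibrium set: for every ε > 0 there exists T > 0 such that inf_{x ∈ ℰ} |(e(t), f(t)) − x| < ε for all t ≥ T, where |·| denotes the entrywise maximum norm. -/
open Finset Filter Topology MeasureTheory intervalIntegral

lemma fl_posPart {g H : ℝ → ℝ} {μ A B : ℝ} (hg : Continuous g) (hH : Continuous H)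
    (hAB : A ≤ B)
    (hmono : ∀ s t, A ≤ s → s ≤ t → t ≤ B → H s ≤ H t)
    (h : ∀ s t, A ≤ s → s ≤ t → t ≤ B → g t - g s ≤ H t - H s - μ * ∫ x in s..t, g x) :
    max (g B) 0 - max (g A) 0 ≤ H B - H A - μ * ∫ x in A..B, max (g x) 0 := by
  have hgp : Continuous fun x => max (g x) 0 := hg.max continuous_const
  have hI : ∀ a b : ℝ, IntervalIntegrable (fun x => max (g x) 0) volume a b :=
    fun a b => hgp.intervalIntegrable a b
  have hIg : ∀ a b : ℝ, IntervalIntegrable g volume a b := fun a b => hg.intervalIntegrable a b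
  set F : ℝ → ℝ := fun t => max (g t) 0 - H t + μ * ∫ x in A..t, max (g x) 0 with hF
  have hFc : Continuous F := by
    have := intervalIntegral.continuous_primitive (μ := volume) hI A
    simp only [hF]; fun_prop
  have key : ∀ ⦃x⦄, x ∈ Set.Icc A B → F x ≤ (fun _ => F A) x := by
    refine image_le_of_liminf_slope_right_le_deriv_boundary (B' := fun _ => 0)
      hFc.continuousOn le_rfl continuousOn_const (fun x _ => hasDerivWithinAt_const _ _ _) ?_
    intro x hx r hr
    apply Eventually.frequently
    have hdiff : ∀ z, F z - F x = max (g z) 0 - max (g x) 0 - (H z - H x)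
        + μ * ∫ y in x..z, max (g y) 0 := by
      intro z
      have := intervalIntegral.integral_add_adjacent_intervals (hI A x) (hI x z)
      simp only [hF]; rw [← this]; ring
    have hzB : ∀ᶠ z in 𝓝[>] x, z ≤ B ∧ x < z := by
      filter_upwards [Ioc_mem_nhdsGT hx.2] with z hz using ⟨hz.2, hz.1⟩
    suffices hs : ∀ᶠ z in 𝓝[>] x, F z - F x ≤ (r/2) * (z - x) by
      filter_upwards [hs, hzB] with z h1 h2
      rw [slope_def_field, div_lt_iff₀ (by linarith [h2.2])]
      nlinarith [h2.2]
    -- uniform neighbourhood statement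
    have near : ∀ p : ℝ → Prop, (∀ᶠ y in 𝓝 x, p y) →
        ∀ᶠ z in 𝓝[>] x, ∀ y ∈ Set.Icc x z, p y := by
      intro p hp
      obtain ⟨ε, hε, hb⟩ := Metric.eventually_nhds_iff.1 hp
      filter_upwards [Ioo_mem_nhdsGT (show x < x + ε by linarith)] with z hz y hy
      apply hb
      rw [Real.dist_eq, abs_of_nonneg (by linarith [hy.1])]
      linarith [hy.2, hz.2]
    rcases lt_trichotomy (g x) 0 with hneg | hzero | hpos
    · have := near _ (hg.continuousAt.eventually_lt_const hneg)
      filter_upwards [this, hzB] with z hz hz2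
      have hint : ∫ y in x..z, max (g y) 0 = 0 := by
        rw [intervalIntegral.integral_congr (g := fun _ => (0:ℝ))]
        · simp
        · intro y hy
          rw [Set.uIcc_of_le hz2.2.le] at hy
          exact max_eq_right (hz y hy).le
      rw [hdiff, hint, max_eq_right hneg.le,
        max_eq_right (hz z ⟨hz2.2.le, le_rfl⟩).le]
      have := hmono x z hx.1 hz2.2.le hz2.1
      nlinarith [hz2.2]
    · have hsm : ∀ᶠ y in 𝓝 x, |μ * g y| < r/2 := by
        have hc : Continuous fun y => |μ * g y| := by fun_prop
        apply hc.continuousAt.eventually_lt_const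
        show |μ * g x| < r/2
        rw [hzero]; simpa using hr
      have := near _ hsm
      filter_upwards [this, hzB] with z hz hz2
      have hH := hmono x z hx.1 hz2.2.le hz2.1
      have hm := h x z hx.1 hz2.2.le hz2.1
      rw [hdiff, hzero, max_self]
      rcases le_total (g z) 0 with h0 | h0
      · rw [max_eq_right h0]
        have : ∫ y in x..z, μ * max (g y) 0 ≤ ∫ y in x..z, (r/2) := by
          apply intervalIntegral.integral_mono_on hz2.2.le ((hI x z).const_mul μ) (by simp)
          intro y hy
          have := hz y hy
          rcases le_total (g y) 0 with h1 | h1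
          · rw [max_eq_right h1]; linarith
          · rw [max_eq_left h1]; exact (le_abs_self _).trans this.le
        rw [intervalIntegral.integral_const_mul, intervalIntegral.integral_const, smul_eq_mul]
          at this
        linarith
      · rw [max_eq_left h0]
        have : ∫ y in x..z, (μ * max (g y) 0 - μ * g y) ≤ ∫ y in x..z, (r/2) := by
          apply intervalIntegral.integral_mono_on hz2.2.le
            (((hI x z).const_mul μ).sub ((hIg x z).const_mul μ)) (by simp)
          intro y hy
          have := hz y hy
          rcases le_total (g y) 0 with h1 | h1
          · rw [max_eq_right h1]; linarith [neg_abs_le (μ * g y)]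
          · rw [max_eq_left h1]; linarith
        rw [intervalIntegral.integral_sub ((hI x z).const_mul μ) ((hIg x z).const_mul μ),
          intervalIntegral.integral_const_mul, intervalIntegral.integral_const_mul,
          intervalIntegral.integral_const, smul_eq_mul] at this
        linarith
    · have := near _ (hg.continuousAt.eventually_const_lt hpos)
      filter_upwards [this, hzB] with z hz hz2
      have hint : ∫ y in x..z, max (g y) 0 = ∫ y in x..z, g y := by
        apply intervalIntegral.integral_congr
        intro y hy
        rw [Set.uIcc_of_le hz2.2.le] at hy
        exact max_eq_left (hz y hy).le
      have hm := h x z hx.1 hz2.2.le hz2.1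
      rw [hdiff, hint, max_eq_left hpos.le,
        max_eq_left (hz z ⟨hz2.2.le, le_rfl⟩).le]
      nlinarith [hz2.2]
  have := key (Set.right_mem_Icc.2 hAB)
  simp only [hF, intervalIntegral.integral_same] at this
  linarith

lemma fl_force {g : ℝ → ℝ} {μ A B a : ℝ} (hμ : 0 < μ) (hg : Continuous g)
    (hAB : A ≤ B)
    (h : ∀ s t, A ≤ s → s ≤ t → t ≤ B → a * (t - s) - μ * ∫ x in s..t, g x ≤ g t - g s) :
    a / μ + (g A - a / μ) * Real.exp (-μ * (B - A)) ≤ g B := by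
  set ψ : ℝ → ℝ := fun t => a / μ + (g A - a / μ) * Real.exp (-μ * (t - A)) with hψ
  have hψc : Continuous ψ := by fun_prop
  have hder : ∀ t, HasDerivAt ψ (a - μ * ψ t) t := by
    intro t
    have h1 : HasDerivAt (fun t : ℝ => -μ * (t - A)) (-μ) t := by
      simpa using ((hasDerivAt_id t).sub_const A).const_mul (-μ)
    have h2 := ((h1.exp).const_mul (g A - a / μ)).const_add (a / μ)
    have h3 : (g A - a / μ) * (Real.exp (-μ * (t - A)) * -μ) = a - μ * ψ t := by
      rw [show ψ t = a / μ + (g A - a / μ) * Real.exp (-μ * (t - A)) from rfl]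
      field_simp; ring
    rw [h3] at h2
    exact h2
  have hint : ∀ s t, ψ t - ψ s = a * (t - s) - μ * ∫ x in s..t, ψ x := by
    intro s t
    have := intervalIntegral.integral_eq_sub_of_hasDerivAt (a := s) (b := t) (fun x _ => hder x)
      ((by fun_prop : Continuous fun x => a - μ * ψ x).intervalIntegrable _ _)
    rw [← this, intervalIntegral.integral_sub (by simp)
      ((by fun_prop : Continuous fun x => μ * ψ x).intervalIntegrable _ _),
      intervalIntegral.integral_const, intervalIntegral.integral_const_mul, smul_eq_mul]
    ring
  have := fl_posPart (g := fun t => ψ t - g t) (H := fun _ => 0) (μ := μ) (hψc.sub hg)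
    continuous_const hAB (fun _ _ _ _ _ => le_rfl) (by
      intro s t h1 h2 h3
      have e1 := h s t h1 h2 h3
      have e2 := hint s t
      rw [intervalIntegral.integral_sub (hψc.intervalIntegrable _ _) (hg.intervalIntegrable _ _)]
      linarith)
  have hA : ψ A - g A = 0 := by simp [hψ]
  have hnn : 0 ≤ ∫ x in A..B, max (ψ x - g x) 0 :=
    intervalIntegral.integral_nonneg hAB (fun _ _ => le_max_right _ _)
  simp only [hA, max_self] at this
  have h4 := le_max_left (ψ B - g B) 0
  have : ψ B ≤ g B := by nlinarith
  exact this

/-- convergence, lower half -/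
lemma fl_conv_lower {w φ : ℝ → ℝ} {μ L : ℝ} (hμ : 0 < μ) (hw : Continuous w) (hφ : Continuous φ)
    (h : ∀ s t, 0 ≤ s → s ≤ t → w t - w s = (∫ x in s..t, φ x) - μ * ∫ x in s..t, w x)
    (hL : Tendsto φ atTop (𝓝 L)) {l : ℝ} (hl : l < L / μ) : ∀ᶠ t in atTop, l < w t := by
  obtain ⟨l', hl1, hl2⟩ := exists_between hl
  have hlt : l' * μ < L := by rwa [lt_div_iff₀ hμ] at hl2
  obtain ⟨T0, hT0⟩ := eventually_atTop.1 (hL.eventually_const_lt hlt)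
  set T := max T0 0
  have hlow : ∀ t, T ≤ t → l' + (w T - l') * Real.exp (-μ * (t - T)) ≤ w t := by
    intro t ht
    have := fl_force (g := w) (μ := μ) (A := T) (B := t) (a := l' * μ) hμ hw ht (by
      intro s t' h1 h2 h3
      rw [h s t' ((le_max_right _ _).trans h1) h2]
      have : ∫ x in s..t', (l' * μ) ≤ ∫ x in s..t', φ x := by
        apply intervalIntegral.integral_mono_on h2 (by simp) (hφ.intervalIntegrable _ _)
        intro y hy
        exact (hT0 y ((le_max_left _ _).trans (h1.trans hy.1))).le
      rw [intervalIntegral.integral_const, smul_eq_mul] at this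
      linarith)
    rwa [mul_div_assoc, div_self hμ.ne', mul_one] at this
  have hlim : Tendsto (fun t => l' + (w T - l') * Real.exp (-μ * (t - T))) atTop (𝓝 (l' + (w T - l') * 0)) := by
    apply Tendsto.const_add
    apply Tendsto.const_mul
    apply Real.tendsto_exp_atBot.comp
    apply Tendsto.const_mul_atTop_of_neg (by linarith)
    exact tendsto_atTop_add_const_right _ _ tendsto_id
  have h5 := hlim.eventually_const_lt (show l < l' + (w T - l') * 0 by simpa using hl1)
  filter_upwards [h5, eventually_ge_atTop T] with t h1 h2
  exact h1.trans_le (hlow t h2)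

lemma fl_conv {w φ : ℝ → ℝ} {μ L : ℝ} (hμ : 0 < μ) (hw : Continuous w) (hφ : Continuous φ)
    (h : ∀ s t, 0 ≤ s → s ≤ t → w t - w s = (∫ x in s..t, φ x) - μ * ∫ x in s..t, w x)
    (hL : Tendsto φ atTop (𝓝 L)) : Tendsto w atTop (𝓝 (L / μ)) := by
  refine tendsto_order.2 ⟨fun l hl => fl_conv_lower hμ hw hφ h hL hl, fun l hl => ?_⟩
  have := fl_conv_lower (w := fun t => - w t) (φ := fun t => - φ t) (L := -L) (l := -l) hμ hw.neg
    hφ.neg (by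
      intro s t h1 h2
      have := h s t h1 h2
      rw [intervalIntegral.integral_neg, intervalIntegral.integral_neg]
      linarith) hL.neg (by rw [neg_div]; linarith)
  filter_upwards [this] with t ht
  linarith

lemma fl_barbalat {φ Z : ℝ → ℝ} {K M : ℝ} (hφ : Continuous φ) (hφ0 : ∀ t, 0 ≤ t → 0 ≤ φ t)
    (hK : ∀ s t, 0 ≤ s → s ≤ t → φ s - K * (t - s) ≤ φ t) (hK0 : 0 < K)
    (hZ : ∀ s t, 0 ≤ s → s ≤ t → (∫ x in s..t, φ x) ≤ Z t - Z s)
    (hM : ∀ t, 0 ≤ t → Z t ≤ M) : ∀ δ > 0, ∃ T, 0 ≤ T ∧ ∀ t, T ≤ t → φ t < δ := by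
  intro δ hδ
  set h := δ / (2 * K)
  have hh : 0 < h := by positivity
  have hKh : K * h = δ / 2 := by simp only [h]; field_simp
  set c := (δ/2) * h
  have hc : 0 < c := by positivity
  set S := Set.image Z (Set.Ici 0)
  have hSb : BddAbove S := ⟨M, by rintro _ ⟨t, ht, rfl⟩; exact hM t ht⟩
  have hSn : S.Nonempty := ⟨Z 0, 0, Set.self_mem_Ici, rfl⟩
  obtain ⟨_, ⟨T, hT, rfl⟩, hTlt⟩ := exists_lt_of_lt_csSup hSn (show sSup S - c < sSup S by linarith)
  have hT : (0:ℝ) ≤ T := hT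
  refine ⟨T, hT, fun t ht => ?_⟩
  by_contra hcon
  push Not at hcon
  have h0 : ∀ s t, 0 ≤ s → s ≤ t → 0 ≤ Z t - Z s := fun s t h1 h2 =>
    (intervalIntegral.integral_nonneg h2 (fun x hx => hφ0 x (h1.trans hx.1))).trans (hZ s t h1 h2)
  have h1 : c ≤ ∫ x in t..(t+h), φ x := by
    have : ∫ x in t..(t+h), (δ/2) ≤ ∫ x in t..(t+h), φ x := by
      apply intervalIntegral.integral_mono_on (by linarith) (by simp) (hφ.intervalIntegrable _ _)
      intro y hy
      have := hK t y (hT.trans ht) hy.1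
      nlinarith [hy.2]
    rw [intervalIntegral.integral_const, smul_eq_mul] at this
    simp only [c]; linarith
  have h2 := hZ t (t+h) (hT.trans ht) (by linarith)
  have h3 := h0 T t hT ht
  have h4 : Z (t+h) ≤ sSup S := le_csSup hSb ⟨t+h, by simp only [Set.mem_Ici]; linarith, rfl⟩
  linarith


/-- cleaned-up, globally continuous version of a fluid solution -/
structure FlSol {r : ℕ} (np : NetParams r) (Q : Mat r) (e f : ℝ → Mat r)
    (D : ℝ → Fin r → ℝ) : Prop where
  ce : ∀ i j, Continuous fun t => e t i j
  cf : ∀ i j, Continuous fun t => f t i j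
  cD : ∀ i, Continuous fun t => D t i
  e0 : ∀ t i j, 0 ≤ e t i j
  e1 : ∀ t i j, e t i j ≤ 1
  f0 : ∀ t i j, 0 ≤ f t i j
  f1 : ∀ t i j, f t i j ≤ 1
  hf : ∀ i j s t, 0 ≤ s → s ≤ t →
    f t i j - f s i j = np.P i j * (D t i - D s i) - np.mu i j * ∫ x in s..t, f x i j
  he : ∀ i j, i ≠ j → ∀ s t, 0 ≤ s → s ≤ t →
    e t i j - e s i j = (∫ x in s..t, Q i j * ∑ k, np.mu k i * f x k i)
      - np.mu i j * ∫ x in s..t, e x i j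
  hd : ∀ i s t, 0 ≤ s → s ≤ t →
    e t i i - e s i i = (∫ x in s..t, ((∑ k ∈ Finset.univ.filter (fun k => k ≠ i),
      np.mu k i * e x k i) + Q i i * ∑ k, np.mu k i * f x k i)) - (D t i - D s i)
  Dle : ∀ i s t, 0 ≤ s → s ≤ t → D t i - D s i ≤ np.lam i * (t - s)
  Dpos : ∀ i s t, 0 ≤ s → s ≤ t → (∀ x, s < x → x ≤ t → 0 < e x i i) →
    D t i - D s i = np.lam i * (t - s)

lemma fl_u_cont {r : ℕ} {np : NetParams r} {Q : Mat r} {e f : ℝ → Mat r} {u : ℝ → Fin r → ℝ}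
    (hsol : IsFluidSol np Q e f u) (hP : ∀ i j, 0 < np.P i j) (i : Fin r) :
    ContinuousOn (fun t => u t i) (Set.Ici 0) := by
  have hc := hsol.cont_f i i
  have hprim : ContinuousOn (fun t => ∫ s in (0:ℝ)..t, f s i i) (Set.Ici 0) := by
    have hg : Continuous fun t => f (max t 0) i i := by
      have := hc.comp_continuous (f := fun t : ℝ => max t 0) (by fun_prop) (fun t => le_max_right t 0)
      exact this
    have h2 : Continuous fun t => ∫ s in (0:ℝ)..t, f (max s 0) i i :=
      intervalIntegral.continuous_primitive (μ := volume) (fun a b => hg.intervalIntegrable a b) 0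
    refine h2.continuousOn.congr ?_
    intro t ht
    apply intervalIntegral.integral_congr
    intro s hs
    rw [Set.uIcc_of_le ht] at hs
    simp [max_eq_left hs.1]
  have hne : np.lam i * np.P i i ≠ 0 := (mul_pos (np.lam_pos i) (hP i i)).ne'
  have : ContinuousOn (fun t => t - (f t i i - f 0 i i + np.mu i i * ∫ s in (0:ℝ)..t, f s i i)
      / (np.lam i * np.P i i)) (Set.Ici 0) := by
    apply continuousOn_id.sub
    apply ContinuousOn.div_const
    exact (hc.sub continuousOn_const).add (continuousOn_const.mul hprim)
  refine this.congr ?_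
  intro t ht
  have := hsol.eq_f i i t ht
  show u t i = _
  rw [eq_sub_iff_add_eq, ← eq_sub_iff_add_eq', div_eq_iff hne, this]
  ring

lemma fl_u_const {r : ℕ} {np : NetParams r} {Q : Mat r} {e f : ℝ → Mat r} {u : ℝ → Fin r → ℝ}
    (hsol : IsFluidSol np Q e f u) (hP : ∀ i j, 0 < np.P i j) (i : Fin r) (s t : ℝ)
    (hs : 0 ≤ s) (hst : s ≤ t) (hpos : ∀ x, s < x → x ≤ t → 0 < e x i i) : u t i = u s i := by
  have hc := fl_u_cont hsol hP i
  have hmono := hsol.u_mono i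
  have hcompl := hsol.compl i
  have hls : lsMeasure (fun t => u t i) = hmono.stieltjesFunction.measure := by
    simp only [lsMeasure, dif_pos hmono]
  rw [hls] at hcompl
  have hmeas : AEMeasurable (fun s => ENNReal.ofReal (e s i i))
      (hmono.stieltjesFunction.measure.restrict (Set.Ici 0)) :=
    ((hsol.cont_e i i).aemeasurable measurableSet_Ici).ennreal_ofReal
  rw [lintegral_eq_zero_iff' hmeas, Filter.EventuallyEq, ae_restrict_iff' measurableSet_Ici] at hcompl
  have h0 : hmono.stieltjesFunction.measure (Set.Ioc s t) = 0 := by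
    refine measure_mono_null ?_ (ae_iff.1 hcompl)
    intro x hx
    simp only [Set.mem_ofPred_eq, Set.mem_Ici, Pi.zero_apply, ENNReal.ofReal_eq_zero, not_forall,
      not_le]
    exact ⟨hs.trans hx.1.le, hpos x hx.1 hx.2⟩
  rw [StieltjesFunction.measure_Ioc, ENNReal.ofReal_eq_zero, Monotone.stieltjesFunction_eq,
    Monotone.stieltjesFunction_eq] at h0
  have hr : ∀ x, 0 ≤ x → Function.rightLim (fun t => u t i) x = u x i := by
    intro x hx
    apply ContinuousWithinAt.rightLim_eq (f := fun t => u t i)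
    exact (hc x hx).mono (Set.Ici_subset_Ici.2 hx)
  rw [hr t (hs.trans hst), hr s hs] at h0
  have := hmono hst
  simp only at this
  linarith

lemma fl_sol {r : ℕ} {np : NetParams r} {Q : Mat r} {e f : ℝ → Mat r} {u : ℝ → Fin r → ℝ}
    (hsol : IsFluidSol np Q e f u) (hP : ∀ i j, 0 < np.P i j) :
    ∃ D, FlSol np Q (fun t => e (max t 0)) (fun t => f (max t 0)) D := by
  have hm : Continuous fun t : ℝ => max t 0 := by fun_prop
  have ce : ∀ i j, Continuous fun t => e (max t 0) i j := fun i j =>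
    (hsol.cont_e i j).comp_continuous (f := fun t : ℝ => max t 0) hm (fun t => le_max_right t 0)
  have cf : ∀ i j, Continuous fun t => f (max t 0) i j := fun i j =>
    (hsol.cont_f i j).comp_continuous (f := fun t : ℝ => max t 0) hm (fun t => le_max_right t 0)
  have cu : ∀ i, Continuous fun t => u (max t 0) i := fun i =>
    (fl_u_cont hsol hP i).comp_continuous (f := fun t : ℝ => max t 0) hm (fun t => le_max_right t 0)
  have cast : ∀ (g : ℝ → ℝ) (t : ℝ), 0 ≤ t →
      ∫ s in (0:ℝ)..t, g s = ∫ s in (0:ℝ)..t, g (max s 0) := by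
    intro g t ht
    apply intervalIntegral.integral_congr
    intro s hs
    rw [Set.uIcc_of_le ht] at hs
    simp [max_eq_left hs.1]
  have split : ∀ (g : ℝ → ℝ) (hg : Continuous fun s => g (max s 0)) (s t : ℝ), 0 ≤ s → s ≤ t →
      ∫ x in s..t, g (max x 0) = (∫ x in (0:ℝ)..t, g x) - ∫ x in (0:ℝ)..s, g x := by
    intro g hg s t h1 h2
    rw [cast g t (h1.trans h2), cast g s h1]
    rw [← intervalIntegral.integral_add_adjacent_intervals (hg.intervalIntegrable 0 s)
      (hg.intervalIntegrable s t)]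
    ring
  refine ⟨fun t i => np.lam i * (max t 0 - u (max t 0) i), ?_⟩
  constructor
  · exact ce
  · exact cf
  · intro i
    exact (hm.sub (cu i)).const_mul _
  · exact fun t i j => ((hsol.mem_T _ (le_max_right t 0)).1 i j).1
  · exact fun t i j => ((hsol.mem_T _ (le_max_right t 0)).1 i j).2
  · exact fun t i j => ((hsol.mem_T _ (le_max_right t 0)).2.1 i j).1
  · exact fun t i j => ((hsol.mem_T _ (le_max_right t 0)).2.1 i j).2
  · intro i j s t h1 h2
    have ht := h1.trans h2
    rw [split (fun x => f x i j) (cf i j) s t h1 h2, max_eq_left h1, max_eq_left ht,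
      hsol.eq_f i j t ht, hsol.eq_f i j s h1]
    ring
  · intro i j hij s t h1 h2
    have ht := h1.trans h2
    rw [split (fun x => e x i j) (ce i j) s t h1 h2, intervalIntegral.integral_const_mul,
      intervalIntegral.integral_finsetSum
        (fun k _ => ((cf k i).const_mul (np.mu k i)).intervalIntegrable _ _)]
    simp_rw [intervalIntegral.integral_const_mul]
    rw [Finset.sum_congr rfl (fun k _ => by rw [split (fun x => f x k i) (cf k i) s t h1 h2]),
      max_eq_left h1, max_eq_left ht, hsol.eq_e_off i j hij t ht, hsol.eq_e_off i j hij s h1]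
    simp_rw [mul_sub]
    rw [Finset.sum_sub_distrib]
    ring
  · intro i s t h1 h2
    have ht := h1.trans h2
    have c1 : Continuous fun x => (∑ k ∈ Finset.univ.filter (fun k => k ≠ i),
      np.mu k i * e (max x 0) k i) := continuous_finsetSum _ (fun k _ => (ce k i).const_mul _)
    have c2 : Continuous fun x => Q i i * ∑ k, np.mu k i * f (max x 0) k i :=
      (continuous_finsetSum _ (fun k _ => (cf k i).const_mul _)).const_mul _
    rw [intervalIntegral.integral_add (c1.intervalIntegrable _ _) (c2.intervalIntegrable _ _),
      intervalIntegral.integral_const_mul,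
      intervalIntegral.integral_finsetSum
        (fun k _ => ((cf k i).const_mul (np.mu k i)).intervalIntegrable _ _),
      intervalIntegral.integral_finsetSum
        (fun k _ => ((ce k i).const_mul (np.mu k i)).intervalIntegrable _ _)]
    simp_rw [intervalIntegral.integral_const_mul]
    rw [Finset.sum_congr (s₂ := (univ : Finset (Fin r))) rfl (fun k _ => by rw [split (fun x => f x k i) (cf k i) s t h1 h2]),
      Finset.sum_congr (s₁ := Finset.univ.filter (fun k => k ≠ i)) rfl (fun k _ => by rw [split (fun x => e x k i) (ce k i) s t h1 h2]),
      max_eq_left h1, max_eq_left ht, hsol.eq_e_diag i t ht, hsol.eq_e_diag i s h1]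
    simp_rw [mul_sub]
    rw [Finset.sum_sub_distrib, Finset.sum_sub_distrib]
    ring
  · intro i s t h1 h2
    have ht := h1.trans h2
    rw [max_eq_left h1, max_eq_left ht]
    have : u s i ≤ u t i := hsol.u_mono i h2
    nlinarith [np.lam_pos i]
  · intro i s t h1 h2 h3
    have ht := h1.trans h2
    rw [max_eq_left h1, max_eq_left ht, fl_u_const hsol hP i s t h1 h2]
    · ring
    · intro x hx1 hx2
      have := h3 x hx1 hx2
      rwa [max_eq_left (h1.trans hx1.le)] at this

/-- stationary vector, scaled so that it touches the capacity constraint -/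
lemma fl_stat {r : ℕ} (hr : 1 ≤ r) (np : NetParams r) (Q : Mat r) (hQ : IsRouting Q)
    (hP : ∀ i j, 0 < np.P i j) (hQd : ∀ i, 0 < Q i i) :
    ∃ π : Fin r → ℝ, (∀ i, 0 < π i) ∧ (∀ i, π i ≤ np.lam i) ∧ (∃ b, π b = np.lam b) ∧
      ∀ i, π i = ∑ k, Q k i * ∑ l, π l * np.P l k := by
  have : Nonempty (Fin r) := ⟨⟨0, hr⟩⟩
  set K : Matrix (Fin r) (Fin r) ℝ := fun l i => ∑ k, np.P l k * Q k i with hK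
  have hKpos : ∀ l i, 0 < K l i := by
    intro l i
    apply Finset.sum_pos' (fun k _ => mul_nonneg (hP l k).le (hQ.1 k i))
    exact ⟨i, mem_univ _, mul_pos (hP l i) (hQd i)⟩
  have hKrow : ∀ l, ∑ i, K l i = 1 := by
    intro l
    simp only [hK]
    rw [Finset.sum_comm]
    simp_rw [← Finset.mul_sum, hQ.2, mul_one]
    exact np.P_rowsum l
  have hdet : (K - 1).det = 0 := by
    rw [← Matrix.exists_mulVec_eq_zero_iff]
    refine ⟨fun _ => 1, ?_, ?_⟩
    · intro h
      have := congrFun h (Classical.arbitrary (Fin r))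
      simp at this
    · ext l
      rw [Matrix.sub_mulVec, Matrix.one_mulVec]
      simp [Matrix.mulVec, dotProduct, hKrow]
  obtain ⟨v, hv0, hv⟩ := Matrix.exists_vecMul_eq_zero_iff.2 hdet
  have hv' : ∀ i, v i = ∑ l, v l * K l i := by
    intro i
    have := congrFun hv i
    rw [Matrix.vecMul_sub, Matrix.vecMul_one] at this
    simp only [Pi.sub_apply, Matrix.vecMul, dotProduct, Pi.zero_apply] at this
    linarith
  have hle : ∀ i, |v i| ≤ ∑ l, |v l| * K l i := by
    intro i
    calc |v i| = |∑ l, v l * K l i| := by rw [← hv' i]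
      _ ≤ ∑ l, |v l * K l i| := Finset.abs_sum_le_sum_abs _ _
      _ = _ := by
        apply Finset.sum_congr rfl; intro l _
        rw [abs_mul, abs_of_pos (hKpos l i)]
  have hsum : ∑ i, |v i| = ∑ i, ∑ l, |v l| * K l i := by
    rw [Finset.sum_comm]
    simp_rw [← Finset.mul_sum, hKrow, mul_one]
  have heq : ∀ i, |v i| = ∑ l, |v l| * K l i := fun i =>
    (Finset.sum_eq_sum_iff_of_le (fun i _ => hle i)).1 hsum i (mem_univ i)
  obtain ⟨l0, hl0⟩ : ∃ l, v l ≠ 0 := by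
    by_contra h
    push Not at h
    exact hv0 (funext h)
  have hpos : ∀ i, 0 < |v i| := by
    intro i
    rw [heq i]
    exact Finset.sum_pos' (fun l _ => mul_nonneg (abs_nonneg _) (hKpos l i).le)
      ⟨l0, mem_univ _, mul_pos (abs_pos.2 hl0) (hKpos l0 i)⟩
  obtain ⟨b, -, hb⟩ := Finset.exists_min_image univ (fun i => np.lam i / |v i|) univ_nonempty
  set c := np.lam b / |v b|
  have hc : 0 < c := div_pos (np.lam_pos b) (hpos b)
  refine ⟨fun i => c * |v i|, fun i => mul_pos hc (hpos i), ?_, ⟨b, ?_⟩, ?_⟩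
  · intro i
    have := hb i (mem_univ i)
    rwa [le_div_iff₀ (hpos i)] at this
  · exact div_mul_cancel₀ _ (hpos b).ne'
  · intro i
    simp only
    rw [heq i, Finset.mul_sum]
    simp only [hK, Finset.mul_sum]
    rw [Finset.sum_comm]
    apply Finset.sum_congr rfl; intro k _
    apply Finset.sum_congr rfl; intro l _
    ring


/-- arrival rate to the idle queue at `i` -/
def flAl {r : ℕ} (np : NetParams r) (Q : Mat r) (e f : Mat r) (i : Fin r) : ℝ :=
  (∑ k ∈ Finset.univ.filter (fun k => k ≠ i), np.mu k i * e k i)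
    + Q i i * ∑ k, np.mu k i * f k i

noncomputable def flF {r : ℕ} (np : NetParams r) (π : Fin r → ℝ) : Mat r :=
  fun i j => π i * np.P i j / np.mu i j

noncomputable def flTh {r : ℕ} (np : NetParams r) (π : Fin r → ℝ) (i : Fin r) : ℝ :=
  ∑ l, π l * np.P l i

noncomputable def flW {r : ℕ} (np : NetParams r) (Q : Mat r) (π : Fin r → ℝ) : Mat r :=
  fun i j => Q i j * flTh np π i / np.mu i j

structure FlPi {r : ℕ} (np : NetParams r) (Q : Mat r) (π : Fin r → ℝ) : Prop where
  P0 : ∀ i j, 0 < np.P i j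
  Q0 : ∀ i j, 0 ≤ Q i j
  Q1 : ∀ i, ∑ j, Q i j = 1
  Qd : ∀ i, 0 < Q i i
  pos : ∀ i, 0 < π i
  le : ∀ i, π i ≤ np.lam i
  stat : ∀ i, π i = ∑ k, Q k i * ∑ l, π l * np.P l k

section
variable {r : ℕ} {np : NetParams r} {Q : Mat r} {π : Fin r → ℝ} {e f : ℝ → Mat r}
  {D : ℝ → Fin r → ℝ}

lemma flF_mul (i j : Fin r) : np.mu i j * flF np π i j = π i * np.P i j := by
  have := (np.mu_pos i j).ne'
  simp only [flF]; field_simp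

lemma flW_mul (i j : Fin r) : np.mu i j * flW np Q π i j = Q i j * flTh np π i := by
  have := (np.mu_pos i j).ne'
  simp only [flW]; field_simp

lemma flF_sum (i : Fin r) : ∑ k, np.mu k i * flF np π k i = flTh np π i := by
  simp_rw [flF_mul]; rfl

lemma flAl_eq (hπ : FlPi np Q π) (i : Fin r) : flAl np Q (flW np Q π) (flF np π) i = π i := by
  simp only [flAl, flF_sum, flW_mul]
  rw [hπ.stat i, ← Finset.add_sum_erase univ _ (mem_univ i), add_comm]
  congr 1
  apply Finset.sum_congr _ (fun _ _ => rfl)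
  ext k; simp

lemma flF_pos (hπ : FlPi np Q π) (i j : Fin r) : 0 < flF np π i j :=
  div_pos (mul_pos (hπ.pos i) (hπ.P0 i j)) (np.mu_pos i j)

lemma flTh_pos (hπ : FlPi np Q π) (i : Fin r) : 0 < flTh np π i :=
  Finset.sum_pos (fun l _ => mul_pos (hπ.pos l) (hπ.P0 l i)) ⟨i, mem_univ _⟩

lemma flW_nonneg (hπ : FlPi np Q π) (i j : Fin r) : 0 ≤ flW np Q π i j :=
  div_nonneg (mul_nonneg (hπ.Q0 i j) (flTh_pos hπ i).le) (np.mu_pos i j).le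

lemma flAl_cont (h : FlSol np Q e f D) (i : Fin r) : Continuous fun t => flAl np Q (e t) (f t) i := by
  have h1 := h.ce
  have h2 := h.cf
  unfold flAl
  exact (continuous_finsetSum _ (fun k _ => (h1 k i).const_mul _)).add
    ((continuous_finsetSum _ (fun k _ => (h2 k i).const_mul _)).const_mul _)

lemma flAl_nonneg (h : FlSol np Q e f D) (hπ : FlPi np Q π) (t : ℝ) (i : Fin r) :
    0 ≤ flAl np Q (e t) (f t) i := by
  unfold flAl
  have h1 : ∀ k, 0 ≤ np.mu k i * e t k i := fun k => mul_nonneg (np.mu_pos k i).le (h.e0 t k i)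
  have h2 : ∀ k, 0 ≤ np.mu k i * f t k i := fun k => mul_nonneg (np.mu_pos k i).le (h.f0 t k i)
  exact add_nonneg (Finset.sum_nonneg (fun k _ => h1 k))
    (mul_nonneg (hπ.Q0 i i) (Finset.sum_nonneg (fun k _ => h2 k)))

lemma fl_D_lower (h : FlSol np Q e f D) (i : Fin r) {ρ : ℝ → ℝ} (hρ : Continuous ρ) {s t c : ℝ}
    (hs : 0 ≤ s) (hst : s ≤ t) (hρ0 : ∀ x, s ≤ x → x ≤ t → 0 ≤ ρ x)
    (hal : ∀ x, s ≤ x → x ≤ t → c - ρ x ≤ flAl np Q (e x) (f x) i) (hc : c ≤ np.lam i) :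
    c * (t - s) - (∫ x in s..t, ρ x) ≤ D t i - D s i := by
  by_cases hz : ∃ x ∈ Set.Icc s t, e x i i = 0
  · set Z := Set.Icc s t ∩ {x | e x i i = 0} with hZ
    have hZc : IsCompact Z := isCompact_Icc.inter_right (isClosed_eq (h.ce i i) continuous_const)
    obtain ⟨x0, hx0, hx0'⟩ := hz
    obtain ⟨τ, ⟨⟨hτ1, hτ2⟩, hτ0⟩, hτm⟩ := hZc.exists_isGreatest ⟨x0, hx0, hx0'⟩
    have hτ0 : e τ i i = 0 := hτ0
    have hp := h.Dpos i τ t (hs.trans hτ1) hτ2 (by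
      intro x hx1 hx2
      refine lt_of_le_of_ne (h.e0 x i i) (fun h0 => ?_)
      have := hτm ⟨⟨hτ1.trans hx1.le, hx2⟩, h0.symm⟩
      linarith)
    have hq := h.hd i s τ hs hτ1
    have hint : ∫ x in s..τ, (c - ρ x) ≤ ∫ x in s..τ, flAl np Q (e x) (f x) i := by
      apply intervalIntegral.integral_mono_on hτ1
        ((continuous_const.sub hρ).intervalIntegrable _ _) ((flAl_cont h i).intervalIntegrable _ _)
      intro y hy
      exact hal y hy.1 (hy.2.trans hτ2)
    rw [intervalIntegral.integral_sub (by simp) (hρ.intervalIntegrable _ _),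
      intervalIntegral.integral_const, smul_eq_mul] at hint
    unfold flAl at hint
    have h3 := intervalIntegral.integral_add_adjacent_intervals (hρ.intervalIntegrable (μ := volume) s τ)
      (hρ.intervalIntegrable τ t)
    have h4 : 0 ≤ ∫ x in τ..t, ρ x := intervalIntegral.integral_nonneg hτ2
      (fun x hx => hρ0 x (hτ1.trans hx.1) hx.2)
    have h5 := h.e0 s i i
    nlinarith
  · push Not at hz
    have hp := h.Dpos i s t hs hst (by
      intro x hx1 hx2
      exact lt_of_le_of_ne (h.e0 x i i) (hz x ⟨hx1.le, hx2⟩).symm)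
    have h4 : 0 ≤ ∫ x in s..t, ρ x := intervalIntegral.integral_nonneg hst
      (fun x hx => hρ0 x hx.1 hx.2)
    nlinarith

lemma fl_D_mono (h : FlSol np Q e f D) (hπ : FlPi np Q π) (i : Fin r) {s t : ℝ}
    (hs : 0 ≤ s) (hst : s ≤ t) : D s i ≤ D t i := by
  have := fl_D_lower h i (ρ := fun _ => 0) continuous_const (c := 0) hs hst (fun _ _ _ => le_rfl)
    (fun x _ _ => by simpa using flAl_nonneg h hπ x i) (np.lam_pos i).le
  simp at this
  linarith

/-- deficits -/
noncomputable def flGf (np : NetParams r) (π : Fin r → ℝ) (f : Mat r) (c : ℝ) : Mat r :=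
  fun i j => max (c * flF np π i j - f i j) 0

noncomputable def flGe (np : NetParams r) (Q : Mat r) (π : Fin r → ℝ) (e : Mat r) (c : ℝ) : Mat r :=
  fun i j => max (c * flW np Q π i j - e i j) 0

noncomputable def flS (np : NetParams r) (Q : Mat r) (π : Fin r → ℝ) (e f : Mat r) (c : ℝ) : ℝ :=
  (∑ i, ∑ j, flGf np π f c i j)
    + ∑ i, ∑ j ∈ Finset.univ.filter (fun j => j ≠ i), flGe np Q π e c i j

lemma flGf_cont (h : FlSol np Q e f D) (c : ℝ) (i j : Fin r) :
    Continuous fun t => flGf np π (f t) c i j := by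
  have := h.cf i j
  unfold flGf; exact (continuous_const.sub this).max continuous_const

lemma flGe_cont (h : FlSol np Q e f D) (c : ℝ) (i j : Fin r) :
    Continuous fun t => flGe np Q π (e t) c i j := by
  have := h.ce i j
  unfold flGe; exact (continuous_const.sub this).max continuous_const

lemma flRho_cont (h : FlSol np Q e f D) (c : ℝ) (i : Fin r) :
    Continuous fun t => flAl np Q (flGe np Q π (e t) c) (flGf np π (f t) c) i := by
  unfold flAl
  exact (continuous_finsetSum _ (fun k _ => (flGe_cont h c k i).const_mul _)).add
    ((continuous_finsetSum _ (fun k _ => (flGf_cont h c k i).const_mul _)).const_mul _)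

lemma flRho_nonneg (hπ : FlPi np Q π) (e f : Mat r) (c : ℝ) (i : Fin r) :
    0 ≤ flAl np Q (flGe np Q π e c) (flGf np π f c) i := by
  unfold flAl
  exact add_nonneg (Finset.sum_nonneg (fun k _ => mul_nonneg (np.mu_pos k i).le (le_max_right _ _)))
    (mul_nonneg (hπ.Q0 i i) (Finset.sum_nonneg
      (fun k _ => mul_nonneg (np.mu_pos k i).le (le_max_right _ _))))

lemma flAl_mono (hπ : FlPi np Q π) {e f e' f' : Mat r} (i : Fin r)
    (he : ∀ k, k ≠ i → e k i ≤ e' k i) (hf : ∀ k, f k i ≤ f' k i) :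
    flAl np Q e f i ≤ flAl np Q e' f' i := by
  unfold flAl
  refine add_le_add (Finset.sum_le_sum (fun k hk => ?_))
    (mul_le_mul_of_nonneg_left (Finset.sum_le_sum (fun k _ => ?_)) (hπ.Q0 i i))
  · exact mul_le_mul_of_nonneg_left (he k (by simpa using hk)) (np.mu_pos k i).le
  · exact mul_le_mul_of_nonneg_left (hf k) (np.mu_pos k i).le

lemma flAl_lin (e f e' f' : Mat r) (c : ℝ) (i : Fin r) :
    flAl np Q (fun k l => c * e k l - e' k l) (fun k l => c * f k l - f' k l) i
      = c * flAl np Q e f i - flAl np Q e' f' i := by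
  unfold flAl
  simp_rw [mul_sub, Finset.sum_sub_distrib, mul_left_comm _ c, ← Finset.mul_sum]
  ring

lemma flAl_ge (hπ : FlPi np Q π) (e f : Mat r) (c : ℝ) (i : Fin r) :
    c * π i - flAl np Q (flGe np Q π e c) (flGf np π f c) i ≤ flAl np Q e f i := by
  have h1 := flAl_lin (np := np) (Q := Q) (flW np Q π) (flF np π) e f c i
  rw [flAl_eq hπ] at h1
  have h2 := flAl_mono hπ (e := fun k l => c * flW np Q π k l - e k l)
    (f := fun k l => c * flF np π k l - f k l) (e' := flGe np Q π e c)
    (f' := flGf np π f c) i (fun k _ => le_max_left _ _) (fun k => le_max_left _ _)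
  linarith

lemma fl_S_core (h : FlSol np Q e f D) (hπ : FlPi np Q π) {c : ℝ} {H : ℝ → Fin r → ℝ}
    (hH : ∀ i, Continuous fun t => H t i) {s t : ℝ} (hs : 0 ≤ s) (hst : s ≤ t)
    (hHm : ∀ i a b, s ≤ a → a ≤ b → b ≤ t → H a i ≤ H b i)
    (hHD : ∀ i a b, s ≤ a → a ≤ b → b ≤ t → c * π i * (b - a) - (D b i - D a i) ≤ H b i - H a i) :
    flS np Q π (e t) (f t) c - flS np Q π (e s) (f s) c ≤
      ∑ i, (H t i - H s i
        - ∫ x in s..t, flAl np Q (flGe np Q π (e x) c) (flGf np π (f x) c) i) := by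
  set a : Mat r := fun i j => np.mu i j * ∫ x in s..t, flGf np π (f x) c i j with ha
  set b : Mat r := fun i j => np.mu i j * ∫ x in s..t, flGe np Q π (e x) c i j with hb
  have hρ : ∀ i, ∫ x in s..t, flAl np Q (flGe np Q π (e x) c) (flGf np π (f x) c) i
      = (∑ k ∈ Finset.univ.filter (fun k => k ≠ i), b k i) + Q i i * ∑ k, a k i := by
    intro i
    unfold flAl
    have c1 : Continuous fun x => ∑ k ∈ Finset.univ.filter (fun k => k ≠ i),
        np.mu k i * flGe np Q π (e x) c k i :=
      continuous_finsetSum _ (fun k _ => (flGe_cont h c k i).const_mul _)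
    have c2 : Continuous fun x => Q i i * ∑ k, np.mu k i * flGf np π (f x) c k i :=
      (continuous_finsetSum _ (fun k _ => (flGf_cont h c k i).const_mul _)).const_mul _
    rw [intervalIntegral.integral_add (c1.intervalIntegrable _ _) (c2.intervalIntegrable _ _),
      intervalIntegral.integral_const_mul,
      intervalIntegral.integral_finsetSum
        (fun k _ => ((flGf_cont h c k i).const_mul (np.mu k i)).intervalIntegrable _ _),
      intervalIntegral.integral_finsetSum
        (fun k _ => ((flGe_cont h c k i).const_mul (np.mu k i)).intervalIntegrable _ _)]
    simp_rw [intervalIntegral.integral_const_mul]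
    rfl
  have hfij : ∀ i j, flGf np π (f t) c i j - flGf np π (f s) c i j
      ≤ np.P i j * (H t i - H s i) - a i j := by
    intro i j
    have := fl_posPart (g := fun x => c * flF np π i j - f x i j) (H := fun x => np.P i j * H x i)
      (μ := np.mu i j) (continuous_const.sub (h.cf i j)) ((hH i).const_mul _) hst
      (fun a b h1 h2 h3 => mul_le_mul_of_nonneg_left (hHm i a b h1 h2 h3) (hπ.P0 i j).le)
      (by
        intro a b h1 h2 h3
        have e1 := h.hf i j a b (hs.trans h1) h2
        have e2 := mul_le_mul_of_nonneg_left (hHD i a b h1 h2 h3) (hπ.P0 i j).le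
        rw [intervalIntegral.integral_sub (by simp) ((h.cf i j).intervalIntegrable _ _),
          intervalIntegral.integral_const, smul_eq_mul]
        have e3 := flF_mul (np := np) (π := π) i j
        have e4 : np.mu i j * ((b - a) * (c * flF np π i j)) = np.P i j * (c * π i * (b - a)) := by
          linear_combination (b - a) * c * e3
        linarith)
    simp only [ha]
    unfold flGf
    linarith
  have heij : ∀ i j, i ≠ j → flGe np Q π (e t) c i j - flGe np Q π (e s) c i j
      ≤ Q i j * (∑ k, a k i) - b i j := by
    intro i j hij
    set R : ℝ → ℝ := fun x => Q i j * ∑ k, np.mu k i * flGf np π (f x) c k i with hR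
    have cR : Continuous R :=
      (continuous_finsetSum _ (fun k _ => (flGf_cont h c k i).const_mul _)).const_mul _
    have hR0 : ∀ x, 0 ≤ R x := fun x => mul_nonneg (hπ.Q0 i j)
      (Finset.sum_nonneg (fun k _ => mul_nonneg (np.mu_pos k i).le (le_max_right _ _)))
    have cRI : Continuous fun x => ∫ y in s..x, R y :=
      intervalIntegral.continuous_primitive (μ := volume) (fun a b => cR.intervalIntegrable a b) s
    have hRd : ∀ a b, (∫ y in s..b, R y) - (∫ y in s..a, R y) = ∫ y in a..b, R y := by
      intro a b
      rw [← intervalIntegral.integral_add_adjacent_intervals (cR.intervalIntegrable s a)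
        (cR.intervalIntegrable a b)]
      ring
    have := fl_posPart (g := fun x => c * flW np Q π i j - e x i j) (H := fun x => ∫ y in s..x, R y)
      (μ := np.mu i j) (continuous_const.sub (h.ce i j)) cRI hst
      (fun a b h1 h2 h3 => by
        have := hRd a b
        have h0 : 0 ≤ ∫ y in a..b, R y := intervalIntegral.integral_nonneg h2 (fun x _ => hR0 x)
        linarith)
      (by
        intro a b h1 h2 h3
        have e1 := h.he i j hij a b (hs.trans h1) h2
        rw [hRd, intervalIntegral.integral_sub (by simp) ((h.ce i j).intervalIntegrable _ _),
          intervalIntegral.integral_const, smul_eq_mul]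
        have e3 := flW_mul (np := np) (Q := Q) (π := π) i j
        have cf' : Continuous fun x => Q i j * ∑ k, np.mu k i * f x k i :=
          (continuous_finsetSum _ (fun k _ => (h.cf k i).const_mul _)).const_mul _
        have e5 : ∫ x in a..b, (c * (Q i j * flTh np π i) - Q i j * ∑ k, np.mu k i * f x k i)
            ≤ ∫ x in a..b, R x := by
          apply intervalIntegral.integral_mono_on h2
            ((continuous_const.sub cf').intervalIntegrable _ _) (cR.intervalIntegrable _ _)
          intro x _
          show c * (Q i j * flTh np π i) - Q i j * ∑ k, np.mu k i * f x k i ≤ _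
          rw [← flF_sum]
          simp only [hR]
          rw [mul_left_comm, ← mul_sub, Finset.mul_sum, ← Finset.sum_sub_distrib]
          refine mul_le_mul_of_nonneg_left (Finset.sum_le_sum (fun k _ => ?_)) (hπ.Q0 i j)
          have : c * flF np π k i - f x k i ≤ flGf np π (f x) c k i := le_max_left _ _
          nlinarith [np.mu_pos k i]
        rw [intervalIntegral.integral_sub (by simp) (cf'.intervalIntegrable _ _),
          intervalIntegral.integral_const, smul_eq_mul, ← e3] at e5
        linarith)
    simp only [intervalIntegral.integral_same, hR, intervalIntegral.integral_const_mul] at this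
    rw [intervalIntegral.integral_finsetSum
        (fun k _ => ((flGf_cont h c k i).const_mul (np.mu k i)).intervalIntegrable _ _)] at this
    simp_rw [intervalIntegral.integral_const_mul] at this
    simp only [ha, hb]
    unfold flGe
    linarith
  have hsum1 : ∑ i, ∑ j, (flGf np π (f t) c i j - flGf np π (f s) c i j)
      ≤ ∑ i, ∑ j, (np.P i j * (H t i - H s i) - a i j) :=
    Finset.sum_le_sum fun i _ => Finset.sum_le_sum fun j _ => hfij i j
  have hsum2 : ∑ i, ∑ j ∈ Finset.univ.filter (fun j => j ≠ i),
      (flGe np Q π (e t) c i j - flGe np Q π (e s) c i j)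
      ≤ ∑ i, ∑ j ∈ Finset.univ.filter (fun j => j ≠ i), (Q i j * (∑ k, a k i) - b i j) :=
    Finset.sum_le_sum fun i _ => Finset.sum_le_sum fun j hj =>
      heij i j (by simpa [eq_comm] using hj)
  simp_rw [Finset.sum_sub_distrib] at hsum1 hsum2
  simp_rw [← Finset.sum_mul, np.P_rowsum, one_mul] at hsum1
  have hQf : ∀ i, ∑ j ∈ Finset.univ.filter (fun j => j ≠ i), Q i j = 1 - Q i i := by
    intro i
    rw [← hπ.Q1 i, ← Finset.add_sum_erase univ _ (mem_univ i), add_sub_cancel_left]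
    apply Finset.sum_congr _ (fun _ _ => rfl)
    ext k; simp
  simp_rw [← Finset.sum_mul, hQf] at hsum2
  have hcomm1 : ∑ i, ∑ j, a i j = ∑ i, ∑ k, a k i := Finset.sum_comm
  have hcomm2 : ∑ i, ∑ j ∈ Finset.univ.filter (fun j => j ≠ i), b i j
      = ∑ i, ∑ k ∈ Finset.univ.filter (fun k => k ≠ i), b k i := by
    simp_rw [Finset.sum_filter]
    rw [Finset.sum_comm]
    simp_rw [ne_comm]
  have hfin : ∑ i, (H t i - H s i
        - ∫ x in s..t, flAl np Q (flGe np Q π (e x) c) (flGf np π (f x) c) i)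
      = (∑ i, H t i - ∑ i, H s i) - ((∑ i, ∑ k ∈ Finset.univ.filter (fun k => k ≠ i), b k i)
        + ∑ i, Q i i * ∑ k, a k i) := by
    simp_rw [hρ]
    rw [Finset.sum_sub_distrib, Finset.sum_sub_distrib, Finset.sum_add_distrib]
  have hexp : ∑ i, (1 - Q i i) * ∑ k, a k i = ∑ i, ∑ k, a k i - ∑ i, Q i i * ∑ k, a k i := by
    simp_rw [sub_mul, one_mul]
    rw [Finset.sum_sub_distrib]
  rw [hfin]
  rw [Finset.sum_sub_distrib] at hsum1
  unfold flS
  linarith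

lemma fl_S_mono (h : FlSol np Q e f D) (hπ : FlPi np Q π) {c : ℝ} (hc1 : c ≤ 1)
    {s t : ℝ} (hs : 0 ≤ s) (hst : s ≤ t) :
    flS np Q π (e t) (f t) c ≤ flS np Q π (e s) (f s) c := by
  have hcont := fun i => flRho_cont (np := np) (Q := Q) (π := π) h c i
  have hd : ∀ i a b, (∫ y in s..b, flAl np Q (flGe np Q π (e y) c) (flGf np π (f y) c) i)
      - (∫ y in s..a, flAl np Q (flGe np Q π (e y) c) (flGf np π (f y) c) i)
      = ∫ y in a..b, flAl np Q (flGe np Q π (e y) c) (flGf np π (f y) c) i := by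
    intro i a b
    rw [← intervalIntegral.integral_add_adjacent_intervals ((hcont i).intervalIntegrable s a)
        ((hcont i).intervalIntegrable a b)]
    ring
  have := fl_S_core h hπ (c := c)
    (H := fun x i => ∫ y in s..x, flAl np Q (flGe np Q π (e y) c) (flGf np π (f y) c) i)
    (fun i => intervalIntegral.continuous_primitive (μ := volume)
      (fun a b => (hcont i).intervalIntegrable a b) s) hs hst
    (fun i a b h1 h2 h3 => by
      have h0 := hd i a b
      have h4 : 0 ≤ ∫ y in a..b, flAl np Q (flGe np Q π (e y) c) (flGf np π (f y) c) i :=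
        intervalIntegral.integral_nonneg h2 (fun x _ => flRho_nonneg hπ _ _ c i)
      linarith)
    (fun i a b h1 h2 h3 => by
      rw [hd]
      have := fl_D_lower h i (hcont i) (c := c * π i) (hs.trans h1) h2
        (fun x _ _ => flRho_nonneg hπ _ _ c i) (fun x _ _ => flAl_ge hπ _ _ c i)
        ((mul_le_of_le_one_left (hπ.pos i).le hc1).trans (hπ.le i))
      linarith)
  simp only [intervalIntegral.integral_same, sub_zero, sub_self, Finset.sum_const_zero] at this
  linarith

lemma fl_Z (h : FlSol np Q e f D) (hπ : FlPi np Q π) {b : Fin r} (hb : π b = np.lam b)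
    {s t : ℝ} (hs : 0 ≤ s) (hst : s ≤ t) :
    (∫ x in s..t, (flAl np Q (e x) (f x) b - π b
      + flAl np Q (flGe np Q π (e x) 1) (flGf np π (f x) 1) b))
    ≤ (e t b b - flS np Q π (e t) (f t) 1) - (e s b b - flS np Q π (e s) (f s) 1) := by
  have hcont := fun i => flRho_cont (np := np) (Q := Q) (π := π) h 1 i
  have hd : ∀ i a b, (∫ y in s..b, flAl np Q (flGe np Q π (e y) 1) (flGf np π (f y) 1) i)
      - (∫ y in s..a, flAl np Q (flGe np Q π (e y) 1) (flGf np π (f y) 1) i)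
      = ∫ y in a..b, flAl np Q (flGe np Q π (e y) 1) (flGf np π (f y) 1) i := by
    intro i a b
    rw [← intervalIntegral.integral_add_adjacent_intervals ((hcont i).intervalIntegrable s a)
        ((hcont i).intervalIntegrable a b)]
    ring
  have := fl_S_core h hπ (c := 1)
    (H := fun x i => if i = b then π i * x - D x i else
      ∫ y in s..x, flAl np Q (flGe np Q π (e y) 1) (flGf np π (f y) 1) i)
    (fun i => by
      by_cases hi : i = b
      · simp only [hi, if_true]
        exact (continuous_const.mul continuous_id).sub (h.cD b)
      · simp only [hi, if_false]
        exact intervalIntegral.continuous_primitive (μ := volume)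
          (fun a b => (hcont i).intervalIntegrable a b) s) hs hst
    (fun i a b' h1 h2 h3 => by
      by_cases hi : i = b
      · simp only [hi, if_true]
        have := h.Dle b a b' (hs.trans h1) h2
        rw [hb]; linarith
      · simp only [hi, if_false]
        have h0 := hd i a b'
        have h4 : 0 ≤ ∫ y in a..b', flAl np Q (flGe np Q π (e y) 1) (flGf np π (f y) 1) i :=
          intervalIntegral.integral_nonneg h2 (fun x _ => flRho_nonneg hπ _ _ 1 i)
        linarith)
    (fun i a b' h1 h2 h3 => by
      by_cases hi : i = b
      · simp only [hi, if_true]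
        linarith
      · simp only [hi, if_false]
        rw [hd]
        have := fl_D_lower h i (hcont i) (c := 1 * π i) (hs.trans h1) h2
          (fun x _ _ => flRho_nonneg hπ _ _ 1 i) (fun x _ _ => flAl_ge hπ _ _ 1 i)
          (by rw [one_mul]; exact hπ.le i)
        linarith)
  rw [Finset.sum_eq_single b (by
    intro i _ hi
    simp [hi]) (by simp)] at this
  simp only [if_true] at this
  have hq := h.hd b s t hs hst
  have hq' : e t b b - e s b b = (∫ x in s..t, flAl np Q (e x) (f x) b) - (D t b - D s b) := hq
  have cal := flAl_cont h b
  have cal2 : Continuous fun x => flAl np Q (e x) (f x) b - π b := cal.sub continuous_const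
  rw [intervalIntegral.integral_add (cal2.intervalIntegrable _ _)
    ((hcont b).intervalIntegrable _ _), intervalIntegral.integral_sub
    (cal.intervalIntegrable _ _) (by simp), intervalIntegral.integral_const, smul_eq_mul]
  linarith

end


section
variable {r : ℕ} {np : NetParams r} {Q : Mat r} {π : Fin r → ℝ} {e f : ℝ → Mat r}
  {D : ℝ → Fin r → ℝ}

def FlLow (np : NetParams r) (Q : Mat r) (π : Fin r → ℝ) (e f : Mat r) (c : ℝ) : Prop :=
  (∀ i j, c * flF np π i j ≤ f i j) ∧ ∀ i j, i ≠ j → c * flW np Q π i j ≤ e i j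

lemma fl_low_S {e f : Mat r} {c : ℝ} (hl : FlLow np Q π e f c) : flS np Q π e f c = 0 := by
  unfold flS flGf flGe
  have h1 : ∀ i j, max (c * flF np π i j - f i j) 0 = 0 := fun i j =>
    max_eq_right (by linarith [hl.1 i j])
  have h2 : ∀ i, ∀ j ∈ Finset.univ.filter (fun j => j ≠ i),
      max (c * flW np Q π i j - e i j) 0 = 0 := fun i j hj =>
    max_eq_right (by linarith [hl.2 i j (by simpa [eq_comm] using hj)])
  simp_rw [h1]
  rw [Finset.sum_congr rfl (fun i _ => Finset.sum_eq_zero (h2 i))]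
  simp

lemma fl_S_low {e f : Mat r} {c : ℝ} (hS : flS np Q π e f c ≤ 0) : FlLow np Q π e f c := by
  unfold flS at hS
  have g1 : ∀ i j, 0 ≤ flGf np π f c i j := fun i j => le_max_right _ _
  have g2 : ∀ i j, 0 ≤ flGe np Q π e c i j := fun i j => le_max_right _ _
  have s1 : 0 ≤ ∑ i, ∑ j, flGf np π f c i j :=
    Finset.sum_nonneg fun i _ => Finset.sum_nonneg fun j _ => g1 i j
  have s2 : 0 ≤ ∑ i, ∑ j ∈ Finset.univ.filter (fun j => j ≠ i), flGe np Q π e c i j :=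
    Finset.sum_nonneg fun i _ => Finset.sum_nonneg fun j _ => g2 i j
  constructor
  · intro i j
    have t1 : flGf np π f c i j ≤ ∑ j, flGf np π f c i j :=
      Finset.single_le_sum (f := fun j => flGf np π f c i j) (fun j _ => g1 i j) (mem_univ j)
    have t2 : ∑ j, flGf np π f c i j ≤ ∑ i, ∑ j, flGf np π f c i j :=
      Finset.single_le_sum (f := fun i => ∑ j, flGf np π f c i j)
        (fun i _ => Finset.sum_nonneg fun j _ => g1 i j) (mem_univ i)
    have t3 : c * flF np π i j - f i j ≤ flGf np π f c i j := le_max_left _ _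
    linarith
  · intro i j hij
    have t1 : flGe np Q π e c i j
        ≤ ∑ j ∈ Finset.univ.filter (fun j => j ≠ i), flGe np Q π e c i j :=
      Finset.single_le_sum (f := fun j => flGe np Q π e c i j) (fun j _ => g2 i j)
        (by simpa [eq_comm] using hij)
    have t2 : ∑ j ∈ Finset.univ.filter (fun j => j ≠ i), flGe np Q π e c i j
        ≤ ∑ i, ∑ j ∈ Finset.univ.filter (fun j => j ≠ i), flGe np Q π e c i j :=
      Finset.single_le_sum
        (f := fun i => ∑ j ∈ Finset.univ.filter (fun j => j ≠ i), flGe np Q π e c i j)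
        (fun i _ => Finset.sum_nonneg fun j _ => g2 i j) (mem_univ i)
    have t3 : c * flW np Q π i j - e i j ≤ flGe np Q π e c i j := le_max_left _ _
    linarith

lemma fl_low_mono (h : FlSol np Q e f D) (hπ : FlPi np Q π) {c : ℝ} (hc1 : c ≤ 1)
    {s t : ℝ} (hs : 0 ≤ s) (hst : s ≤ t) (hl : FlLow np Q π (e s) (f s) c) :
    FlLow np Q π (e t) (f t) c :=
  fl_S_low ((fl_S_mono h hπ hc1 hs hst).trans (fl_low_S hl).le)

lemma fl_low_anti (hπ : FlPi np Q π) {e f : Mat r} {a c : ℝ} (hac : a ≤ c)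
    (hl : FlLow np Q π e f c) : FlLow np Q π e f a :=
  ⟨fun i j => (mul_le_mul_of_nonneg_right hac (flF_pos hπ i j).le).trans (hl.1 i j),
   fun i j hij => (mul_le_mul_of_nonneg_right hac (flW_nonneg hπ i j)).trans (hl.2 i j hij)⟩

lemma fl_low_zero (h : FlSol np Q e f D) (t : ℝ) : FlLow np Q π (e t) (f t) 0 :=
  ⟨fun i j => by simpa using h.f0 t i j, fun i j _ => by simpa using h.e0 t i j⟩

lemma fl_low_al (hπ : FlPi np Q π) {e f : Mat r} {a : ℝ} (hl : FlLow np Q π e f a) (i k : Fin r) :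
    a * π i + Q i i * (np.mu k i * (f k i - a * flF np π k i)) ≤ flAl np Q e f i := by
  have h1 := flAl_lin (np := np) (Q := Q) (flW np Q π) (flF np π) e f a i
  rw [flAl_eq hπ] at h1
  have h2 : Q i i * (np.mu k i * (f k i - a * flF np π k i)) ≤
      - flAl np Q (fun k l => a * flW np Q π k l - e k l) (fun k l => a * flF np π k l - f k l) i := by
    unfold flAl
    rw [neg_add, ← mul_neg, ← Finset.sum_neg_distrib, ← Finset.sum_neg_distrib]
    have s1 : 0 ≤ ∑ k ∈ Finset.univ.filter (fun k => k ≠ i),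
        -(np.mu k i * (a * flW np Q π k i - e k i)) := by
      apply Finset.sum_nonneg
      intro k hk
      have := hl.2 k i (by simpa using hk)
      nlinarith [np.mu_pos k i]
    have s2 : np.mu k i * (f k i - a * flF np π k i) ≤
        ∑ k, -(np.mu k i * (a * flF np π k i - f k i)) := by
      have := Finset.single_le_sum (f := fun k => -(np.mu k i * (a * flF np π k i - f k i)))
        (s := univ) (fun k _ => by
          have := hl.1 k i
          nlinarith [np.mu_pos k i]) (mem_univ k)
      linarith
    have := mul_le_mul_of_nonneg_left s2 (hπ.Q0 i i)
    linarith
  linarith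

lemma fl_lip (h : FlSol np Q e f D) (hπ : FlPi np Q π) : ∃ K : ℝ, 0 < K ∧ ∀ i j s t, 0 ≤ s → s ≤ t →
    |f t i j - f s i j| ≤ K * (t - s) ∧ (i ≠ j → |e t i j - e s i j| ≤ K * (t - s)) := by
  obtain ⟨K, hK⟩ := Finite.exists_le (fun p : Fin r × Fin r =>
    np.P p.1 p.2 * np.lam p.1 + np.mu p.1 p.2 + Q p.1 p.2 * ∑ k, np.mu k p.1)
  refine ⟨max K 1, by positivity, ?_⟩
  intro i j s t hs hst
  have hK' : np.P i j * np.lam i + np.mu i j + Q i j * ∑ k, np.mu k i ≤ max K 1 :=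
    (hK (i, j)).trans (le_max_left _ _)
  have hμ := np.mu_pos i j
  have hPl := mul_pos (hπ.P0 i j) (np.lam_pos i)
  have hQs : 0 ≤ Q i j * ∑ k, np.mu k i :=
    mul_nonneg (hπ.Q0 i j) (Finset.sum_nonneg fun k _ => (np.mu_pos k i).le)
  have bd : ∀ (g : ℝ → ℝ) (M : ℝ), Continuous g → (∀ x, 0 ≤ g x) → (∀ x, g x ≤ M) →
      0 ≤ ∫ x in s..t, g x ∧ ∫ x in s..t, g x ≤ M * (t - s) := by
    intro g M hg h0 h1
    refine ⟨intervalIntegral.integral_nonneg hst (fun x _ => h0 x), ?_⟩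
    have : ∫ x in s..t, g x ≤ ∫ x in s..t, M :=
      intervalIntegral.integral_mono_on hst (hg.intervalIntegrable _ _) (by simp) (fun x _ => h1 x)
    rw [intervalIntegral.integral_const, smul_eq_mul] at this
    linarith
  have hts : 0 ≤ t - s := by linarith
  have hKt := mul_le_mul_of_nonneg_right hK' hts
  have hQt := mul_nonneg hQs hts
  have hμt := mul_nonneg hμ.le hts
  have hPt := mul_nonneg hPl.le hts
  constructor
  · obtain ⟨b1, b2⟩ := bd _ 1 (h.cf i j) (fun x => h.f0 x i j) (fun x => h.f1 x i j)
    rw [h.hf i j s t hs hst, abs_le]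
    have d1 := fl_D_mono h hπ i hs hst
    have d2 := h.Dle i s t hs hst
    have m1 := mul_le_mul_of_nonneg_left b2 hμ.le
    have m2 := mul_nonneg hμ.le b1
    have m3 := mul_nonneg (hπ.P0 i j).le (sub_nonneg.2 d1)
    have m4 := mul_le_mul_of_nonneg_left d2 (hπ.P0 i j).le
    constructor <;> nlinarith
  · intro hij
    obtain ⟨b1, b2⟩ := bd _ 1 (h.ce i j) (fun x => h.e0 x i j) (fun x => h.e1 x i j)
    have cf' : Continuous fun x => Q i j * ∑ k, np.mu k i * f x k i :=
      (continuous_finsetSum _ (fun k _ => (h.cf k i).const_mul _)).const_mul _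
    obtain ⟨b3, b4⟩ := bd _ (Q i j * ∑ k, np.mu k i) cf'
      (fun x => mul_nonneg (hπ.Q0 i j) (Finset.sum_nonneg fun k _ =>
        mul_nonneg (np.mu_pos k i).le (h.f0 x k i)))
      (fun x => mul_le_mul_of_nonneg_left (Finset.sum_le_sum fun k _ =>
        mul_le_of_le_one_right (np.mu_pos k i).le (h.f1 x k i)) (hπ.Q0 i j))
    rw [h.he i j hij s t hs hst, abs_le]
    have m1 := mul_le_mul_of_nonneg_left b2 hμ.le
    have m2 := mul_nonneg hμ.le b1
    constructor <;> nlinarith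

lemma flAl_lip (hπ : FlPi np Q π) {e f e' f' : Mat r} (i : Fin r) {d : ℝ}
    (he : ∀ k, k ≠ i → e k i - d ≤ e' k i) (hf : ∀ k, f k i - d ≤ f' k i) :
    flAl np Q e f i - d * flAl np Q (fun _ _ => 1) (fun _ _ => 1) i ≤ flAl np Q e' f' i := by
  have h1 := flAl_mono hπ (e := fun k l => 1 * e k l - (d * 1 - 0))
    (f := fun k l => 1 * f k l - (d * 1 - 0)) (e' := e') (f' := f') i
    (fun k hk => by simpa using he k hk) (fun k => by simpa using hf k)
  rw [flAl_lin e f (fun _ _ => d * 1 - 0) (fun _ _ => d * 1 - 0) 1 i,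
    flAl_lin (fun _ _ => 1) (fun _ _ => 1) (fun _ _ => 0) (fun _ _ => 0) d i] at h1
  have h0 : flAl np Q (fun _ _ => 0) (fun _ _ => 0) i = 0 := by simp [flAl]
  rw [h0] at h1
  linarith

lemma flAl_one_pos (hπ : FlPi np Q π) (i : Fin r) :
    0 < flAl np Q (fun _ _ => 1) (fun _ _ => 1) i := by
  unfold flAl
  have h1 : ∀ k, 0 < np.mu k i * 1 := fun k => by simpa using np.mu_pos k i
  exact add_pos_of_nonneg_of_pos (Finset.sum_nonneg (fun k _ => (h1 k).le))
    (mul_pos (hπ.Qd i) (Finset.sum_pos (fun k _ => h1 k) ⟨i, mem_univ _⟩))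

lemma fl_al_lip (h : FlSol np Q e f D) (hπ : FlPi np Q π) (i : Fin r) : ∃ K : ℝ, 0 < K ∧
    ∀ s t, 0 ≤ s → s ≤ t →
      flAl np Q (e s) (f s) i - K * (t - s) ≤ flAl np Q (e t) (f t) i ∧
      flAl np Q (flGe np Q π (e s) 1) (flGf np π (f s) 1) i - K * (t - s)
        ≤ flAl np Q (flGe np Q π (e t) 1) (flGf np π (f t) 1) i := by
  obtain ⟨K, hK0, hK⟩ := fl_lip h hπ
  refine ⟨K * flAl np Q (fun _ _ => 1) (fun _ _ => 1) i, mul_pos hK0 (flAl_one_pos hπ i), ?_⟩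
  intro s t hs hst
  have hd : 0 ≤ K * (t - s) := mul_nonneg hK0.le (by linarith)
  constructor
  · have := flAl_lip hπ (e := e s) (f := f s) (e' := e t) (f' := f t) i (d := K * (t - s))
      (fun k hk => by
        have := (abs_le.1 ((hK k i s t hs hst).2 hk)).1
        linarith)
      (fun k => by
        have := (abs_le.1 ((hK k i s t hs hst).1)).1
        linarith)
    linarith
  · have := flAl_lip hπ (e := flGe np Q π (e s) 1) (f := flGf np π (f s) 1)
      (e' := flGe np Q π (e t) 1) (f' := flGf np π (f t) 1) i (d := K * (t - s))
      (fun k hk => by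
        have := (abs_le.1 ((hK k i s t hs hst).2 hk)).2
        unfold flGe
        rw [sub_le_iff_le_add]
        have h1 := le_max_left (1 * flW np Q π k i - e t k i) 0
        have h2 := le_max_right (1 * flW np Q π k i - e t k i) 0
        apply max_le <;> linarith)
      (fun k => by
        have := (abs_le.1 ((hK k i s t hs hst).1)).2
        unfold flGf
        rw [sub_le_iff_le_add]
        have h1 := le_max_left (1 * flF np π k i - f t k i) 0
        have h2 := le_max_right (1 * flF np π k i - f t k i) 0
        apply max_le <;> linarith)
    linarith

lemma fl_case_top (h : FlSol np Q e f D) (hπ : FlPi np Q π) {b : Fin r} (hb : π b = np.lam b) :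
    ∀ δ > 0, ∃ T, 0 ≤ T ∧ ∀ t, T ≤ t → flAl np Q (e t) (f t) b < π b + δ := by
  obtain ⟨K, hK0, hK⟩ := fl_al_lip h hπ b
  intro δ hδ
  obtain ⟨T, hT, hT'⟩ := fl_barbalat (K := 2 * K) (M := 1)
    (φ := fun x => flAl np Q (e x) (f x) b - π b
      + flAl np Q (flGe np Q π (e x) 1) (flGf np π (f x) 1) b)
    (Z := fun t => e t b b - flS np Q π (e t) (f t) 1)
    (((flAl_cont h b).sub continuous_const).add (flRho_cont h 1 b))
    (fun t _ => by
      have := flAl_ge hπ (e t) (f t) 1 b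
      linarith)
    (fun s t hs hst => by
      have := hK s t hs hst
      linarith [this.1, this.2]) (by linarith)
    (fun s t hs hst => fl_Z h hπ hb hs hst)
    (fun t _ => by
      have h1 := h.e1 t b b
      have : 0 ≤ flS np Q π (e t) (f t) 1 := by
        unfold flS
        exact add_nonneg
          (Finset.sum_nonneg fun i _ => Finset.sum_nonneg fun j _ => le_max_right _ _)
          (Finset.sum_nonneg fun i _ => Finset.sum_nonneg fun j _ => le_max_right _ _)
      linarith) δ hδ
  refine ⟨T, hT, fun t ht => ?_⟩
  have h1 := hT' t ht
  have h2 := flRho_nonneg hπ (e t) (f t) 1 b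
  linarith

lemma fl_node {g : ℝ → ℝ} {μ A B base d w : ℝ} (hμ : 0 < μ) (hg : Continuous g)
    (hw : 0 ≤ w) (hAB : A + w ≤ B) (hd : 0 ≤ d) (hA : base ≤ g A)
    (h : ∀ s t, A ≤ s → s ≤ t → t ≤ B →
      (μ * base + d) * (t - s) - μ * ∫ x in s..t, g x ≤ g t - g s) :
    base + d / μ * (1 - Real.exp (-μ * w)) ≤ g B := by
  have h1 := fl_force hμ hg (by linarith) h
  have h2 : (μ * base + d) / μ = base + d / μ := by field_simp
  rw [h2] at h1
  have h3 : Real.exp (-μ * (B - A)) ≤ Real.exp (-μ * w) := by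
    apply Real.exp_le_exp.2; nlinarith
  have h4 := Real.exp_pos (-μ * (B - A))
  have h5 : 0 ≤ d / μ := by positivity
  nlinarith [mul_nonneg (sub_nonneg.2 hA) h4.le, mul_le_mul_of_nonneg_left h3 h5]

lemma fl_gain_pos {μ w d : ℝ} (hμ : 0 < μ) (hw : 0 < w) (hd : 0 < d) :
    0 < d / μ * (1 - Real.exp (-μ * w)) := by
  apply mul_pos (div_pos hd hμ)
  rw [sub_pos, Real.exp_lt_one_iff]
  nlinarith

lemma fl_prop (h : FlSol np Q e f D) (hπ : FlPi np Q π) (b : Fin r) {c δ : ℝ} (hc : c < 1)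
    (hδ : 0 < δ) : ∃ δ' > 0, ∃ h' > 0, c + δ' ≤ 1 ∧ ∀ a t, 0 ≤ a → a ≤ c → 0 ≤ t →
      FlLow np Q π (e t) (f t) a → c * π b + δ ≤ flAl np Q (e t) (f t) b →
      FlLow np Q π (e (t + h')) (f (t + h')) (a + δ') := by
  obtain ⟨K, hK0, hK⟩ := fl_al_lip h hπ b
  set w := δ / (6 * K) with hw
  have hw0 : 0 < w := by positivity
  have hKw : K * (3 * w) = δ / 2 := by rw [hw]; field_simp; norm_num
  have hc' : 0 < 1 - c := by linarith
  set d0 := min (δ / 2) ((1 - c) * π b) with hd0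
  have hd0p : 0 < d0 := lt_min (by linarith) (mul_pos hc' (hπ.pos b))
  set d1 : Fin r → ℝ := fun j => np.P b j * d0 / np.mu b j * (1 - Real.exp (-np.mu b j * w)) with hd1
  have hd1p : ∀ j, 0 < d1 j := fun j =>
    fl_gain_pos (np.mu_pos b j) hw0 (mul_pos (hπ.P0 b j) hd0p)
  set d2 : Fin r → ℝ := fun l => min (Q l l * (np.mu b l * d1 l)) ((1 - c) * π l) with hd2
  have hd2p : ∀ l, 0 < d2 l := fun l =>
    lt_min (mul_pos (hπ.Qd l) (mul_pos (np.mu_pos b l) (hd1p l))) (mul_pos hc' (hπ.pos l))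
  set d3 : Mat r := fun l j => np.P l j * d2 l / np.mu l j * (1 - Real.exp (-np.mu l j * w)) with hd3
  have hd3p : ∀ l j, 0 < d3 l j := fun l j =>
    fl_gain_pos (np.mu_pos l j) hw0 (mul_pos (hπ.P0 l j) (hd2p l))
  set d4 : Fin r → ℝ := fun i => ∑ k, np.mu k i * d3 k i with hd4
  have hd4p : ∀ i, 0 < d4 i := fun i =>
    Finset.sum_pos (fun k _ => mul_pos (np.mu_pos k i) (hd3p k i)) ⟨i, mem_univ _⟩
  have hex : ∀ᶠ x in 𝓝[>] (0:ℝ), 0 < x ∧ x ≤ 1 - c ∧ ∀ i j, x ≤ d3 i j / flF np π i j ∧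
      x ≤ d4 i / flTh np π i * (1 - Real.exp (-np.mu i j * w)) := by
    have ev : ∀ y : ℝ, 0 < y → ∀ᶠ x in 𝓝[>] (0:ℝ), x ≤ y := fun y hy => by
      filter_upwards [Ioc_mem_nhdsGT hy] with x hx using hx.2
    refine (eventually_mem_nhdsWithin.mono fun x hx => hx).and ((ev _ hc').and ?_)
    refine eventually_all.2 fun i => eventually_all.2 fun j => (ev _ ?_).and (ev _ ?_)
    · exact div_pos (hd3p i j) (flF_pos hπ i j)
    · apply mul_pos (div_pos (hd4p i) (flTh_pos hπ i))
      rw [sub_pos, Real.exp_lt_one_iff]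
      nlinarith [np.mu_pos i j]
  obtain ⟨δ', hδ'0, hδ'c, hδ'⟩ := hex.exists
  refine ⟨δ', hδ'0, 3 * w, by positivity, by linarith, ?_⟩
  intro a t ha hac ht hlow hal
  have ha1 : a ≤ 1 := by linarith
  have low : ∀ x, t ≤ x → FlLow np Q π (e x) (f x) a := fun x hx => fl_low_mono h hπ ha1 ht hx hlow
  -- generic station-to-node step
  have node : ∀ (i j : Fin r) (d A B : ℝ), 0 < d → t ≤ A → A + w ≤ B → d ≤ (1 - c) * π i →
      (∀ x, A ≤ x → x ≤ B → a * π i + d ≤ flAl np Q (e x) (f x) i) →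
      a * flF np π i j + np.P i j * d / np.mu i j * (1 - Real.exp (-np.mu i j * w)) ≤ f B i j := by
    intro i j d A B hd hA hB hdle hal
    refine fl_node (np.mu_pos i j) (h.cf i j) hw0.le hB (mul_pos (hπ.P0 i j) hd).le
      ((low A hA).1 i j) ?_
    intro s u h1 h2 h3
    have hcap : a * π i + d ≤ np.lam i := by nlinarith [hπ.pos i, hπ.le i]
    have hD := fl_D_lower h i (ρ := fun _ => 0) continuous_const (c := a * π i + d)
      (s := s) (t := u) (by linarith) h2 (fun _ _ _ => le_rfl)
      (fun x hx1 hx2 => by simpa using hal x (by linarith) (by linarith)) hcap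
    simp only [intervalIntegral.integral_zero, sub_zero] at hD
    rw [h.hf i j s u (by linarith) h2]
    have e3 := flF_mul (np := np) (π := π) i j
    have e4 := mul_le_mul_of_nonneg_left hD (hπ.P0 i j).le
    have e5 : (np.mu i j * (a * flF np π i j) + np.P i j * d) * (u - s)
        = np.P i j * ((a * π i + d) * (u - s)) := by
      linear_combination a * (u - s) * e3
    linarith
  have s1 : ∀ x, t ≤ x → x ≤ t + 3 * w → a * π b + d0 ≤ flAl np Q (e x) (f x) b := by
    intro x h1 h2
    have := (hK t x ht h1).1
    have hd : d0 ≤ δ / 2 := min_le_left _ _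
    have : K * (x - t) ≤ K * (3 * w) := mul_le_mul_of_nonneg_left (by linarith) hK0.le
    have := mul_le_mul_of_nonneg_right hac (hπ.pos b).le
    linarith
  have s2 : ∀ x l, t + w ≤ x → x ≤ t + 3 * w → a * π l + d2 l ≤ flAl np Q (e x) (f x) l := by
    intro x l h1 h2
    have n1 := node b l d0 t x hd0p le_rfl h1 (min_le_right _ _)
      (fun y h3 h4 => s1 y h3 (h4.trans h2))
    have n2 := fl_low_al hπ (low x (by linarith)) l b
    have n3 : d1 l ≤ f x b l - a * flF np π b l := by simp only [hd1]; linarith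
    have n4 := mul_le_mul_of_nonneg_left (mul_le_mul_of_nonneg_left n3 (np.mu_pos b l).le)
      (hπ.Q0 l l)
    have n5 : d2 l ≤ Q l l * (np.mu b l * d1 l) := min_le_left _ _
    linarith
  have s3 : ∀ x l j, t + 2 * w ≤ x → x ≤ t + 3 * w → a * flF np π l j + d3 l j ≤ f x l j := by
    intro x l j h1 h2
    exact node l j (d2 l) (t + w) x (hd2p l) (by linarith) (by linarith) (min_le_right _ _)
      (fun y h3 h4 => s2 y l h3 (h4.trans h2))
  constructor
  · intro i j
    have := s3 (t + 3 * w) i j (by linarith) le_rfl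
    have h2 := (hδ' i j).1
    rw [le_div_iff₀ (flF_pos hπ i j)] at h2
    linarith
  · intro i j hij
    have cf' : Continuous fun x => Q i j * ∑ k, np.mu k i * f x k i :=
      (continuous_finsetSum _ (fun k _ => (h.cf k i).const_mul _)).const_mul _
    have hn := fl_node (base := a * flW np Q π i j) (d := Q i j * d4 i) (A := t + 2 * w)
      (B := t + 3 * w) (w := w) (np.mu_pos i j)
      (h.ce i j) hw0.le (by linarith) (mul_nonneg (hπ.Q0 i j) (hd4p i).le)
      ((low (t + 2 * w) (by linarith)).2 i j hij) (by
        intro s u h1 h2 h3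
        rw [h.he i j hij s u (by linarith) h2]
        have e3 := flW_mul (np := np) (Q := Q) (π := π) i j
        have : ∫ x in s..u, (a * (Q i j * flTh np π i) + Q i j * d4 i)
            ≤ ∫ x in s..u, Q i j * ∑ k, np.mu k i * f x k i := by
          apply intervalIntegral.integral_mono_on h2 (by simp) (cf'.intervalIntegrable _ _)
          intro x hx
          rw [← flF_sum]
          have : a * ∑ k, np.mu k i * flF np π k i + d4 i ≤ ∑ k, np.mu k i * f x k i := by
            simp only [hd4]
            rw [Finset.mul_sum, ← Finset.sum_add_distrib]
            apply Finset.sum_le_sum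
            intro k _
            have := s3 x k i (by linarith [hx.1]) (by linarith [hx.2])
            nlinarith [np.mu_pos k i]
          have := mul_le_mul_of_nonneg_left this (hπ.Q0 i j)
          linarith
        rw [intervalIntegral.integral_const, smul_eq_mul, ← e3] at this
        linarith)
    have h2 := (hδ' i j).2
    have h3 : δ' * flW np Q π i j ≤ Q i j * d4 i / np.mu i j * (1 - Real.exp (-np.mu i j * w)) := by
      calc δ' * flW np Q π i j ≤ (d4 i / flTh np π i * (1 - Real.exp (-np.mu i j * w))) * flW np Q π i j :=
            mul_le_mul_of_nonneg_right h2 (flW_nonneg hπ i j)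
        _ = _ := by
            have := (flTh_pos hπ i).ne'
            have := (np.mu_pos i j).ne'
            unfold flW; field_simp
    linarith

lemma fl_level (h : FlSol np Q e f D) (hπ : FlPi np Q π) {b : Fin r} (hb : π b = np.lam b) :
    ∃ c, 0 ≤ c ∧ c ≤ 1 ∧ (∀ a < c, ∀ᶠ t in atTop, FlLow np Q π (e t) (f t) a) ∧
      ∀ δ > 0, ∀ᶠ t in atTop, flAl np Q (e t) (f t) b < c * π b + δ := by
  set C : Set ℝ := {c | 0 ≤ c ∧ c ≤ 1 ∧ ∃ t, 0 ≤ t ∧ FlLow np Q π (e t) (f t) c} with hC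
  have h0 : (0:ℝ) ∈ C := ⟨le_rfl, zero_le_one, 0, le_rfl, fl_low_zero h 0⟩
  have hbd : BddAbove C := ⟨1, fun c hc => hc.2.1⟩
  set c := sSup C with hcdef
  have hc0 : 0 ≤ c := le_csSup hbd h0
  have hc1 : c ≤ 1 := csSup_le ⟨0, h0⟩ fun c hc => hc.2.1
  have hlow : ∀ a < c, ∀ᶠ t in atTop, FlLow np Q π (e t) (f t) a := by
    intro a ha
    obtain ⟨c', ⟨_, hc'1, s, hs, hl⟩, hac⟩ := exists_lt_of_lt_csSup ⟨0, h0⟩ ha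
    filter_upwards [eventually_ge_atTop s] with t ht
    exact fl_low_anti hπ hac.le (fl_low_mono h hπ hc'1 hs ht hl)
  refine ⟨c, hc0, hc1, hlow, ?_⟩
  intro δ hδ
  rcases eq_or_lt_of_le hc1 with hc | hc
  · obtain ⟨T, _, hT⟩ := fl_case_top h hπ hb δ hδ
    filter_upwards [eventually_ge_atTop T] with t ht
    rw [hc, one_mul]
    exact hT t ht
  · by_contra hcon
    rw [Filter.not_eventually] at hcon
    obtain ⟨δ', hδ', h', hh', hle, hp⟩ := fl_prop h hπ b hc hδ
    have hl : ∀ᶠ t in atTop, FlLow np Q π (e t) (f t) (max 0 (c - δ' / 2)) := by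
      rcases max_cases (0:ℝ) (c - δ' / 2) with hm | hm
      · rw [hm.1]; exact Eventually.of_forall fun t => fl_low_zero h t
      · rw [hm.1]; exact hlow _ (by linarith)
    obtain ⟨t, htal, htl, ht0⟩ := (hcon.and_eventually (hl.and (eventually_ge_atTop 0))).exists
    have hac : max 0 (c - δ' / 2) ≤ c := max_le hc0 (by linarith)
    have hge : c - δ' / 2 ≤ max 0 (c - δ' / 2) := le_max_right _ _
    have hge0 : 0 ≤ max 0 (c - δ' / 2) := le_max_left _ _
    have hfin := hp _ t hge0 hac ht0 htl (not_lt.1 htal)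
    have : max 0 (c - δ' / 2) + δ' ≤ c :=
      le_csSup hbd ⟨by linarith, by linarith, t + h', by linarith, hfin⟩
    linarith

end


section
variable {r : ℕ} {np : NetParams r} {Q : Mat r} {π : Fin r → ℝ} {e f : ℝ → Mat r}
  {D : ℝ → Fin r → ℝ}

lemma fl_lim_fb (hπ : FlPi np Q π) {b : Fin r} {c : ℝ}
    (hlow : ∀ a, a < c → ∀ᶠ t in atTop, FlLow np Q π (e t) (f t) a)
    (hup : ∀ δ, 0 < δ → ∀ᶠ t in atTop, flAl np Q (e t) (f t) b < c * π b + δ) (k : Fin r) :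
    Tendsto (fun t => f t k b) atTop (𝓝 (c * flF np π k b)) := by
  have hF := flF_pos hπ k b
  refine tendsto_order.2 ⟨fun l hl => ?_, fun l hl => ?_⟩
  · have h1 : l / flF np π k b < c := (div_lt_iff₀ hF).2 hl
    obtain ⟨a, ha1, ha2⟩ := exists_between h1
    filter_upwards [hlow a ha2] with t ht
    exact lt_of_lt_of_le ((div_lt_iff₀ hF).1 ha1) (ht.1 k b)
  · have hQ := hπ.Qd b
    have hm := np.mu_pos k b
    have hp := hπ.pos b
    set δ := (l - c * flF np π k b) * (Q b b * np.mu k b) / 2 with hδ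
    have hδ0 : 0 < δ := by
      have : 0 < l - c * flF np π k b := by linarith
      positivity
    have hdp : δ / π b * π b = δ := by field_simp
    have hdp0 : 0 < δ / π b := by positivity
    filter_upwards [hlow (c - δ / π b) (by linarith), hup δ hδ0] with t h1 h2
    have h3 := fl_low_al hπ h1 b k
    have h4 : Q b b * np.mu k b * (f t k b - (c - δ / π b) * flF np π k b) <
        Q b b * np.mu k b * (l - c * flF np π k b) := by nlinarith
    have h5 := lt_of_mul_lt_mul_left h4 (by positivity)
    nlinarith [mul_pos hdp0 hF]

lemma fl_lim_f (h : FlSol np Q e f D) (hπ : FlPi np Q π) {b k : Fin r} {c : ℝ}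
    (hb : Tendsto (fun t => f t k b) atTop (𝓝 (c * flF np π k b))) (j : Fin r) :
    Tendsto (fun t => f t k j) atTop (𝓝 (c * flF np π k j)) := by
  have hPb := (hπ.P0 k b).ne'
  have hPj := (hπ.P0 k j).ne'
  have hmb := (np.mu_pos k b).ne'
  have hmj := (np.mu_pos k j).ne'
  have cb := h.cf k b
  have cj := h.cf k j
  have key := fl_conv (w := fun t => f t k j / np.P k j - f t k b / np.P k b)
    (φ := fun t => (np.mu k b - np.mu k j) * (f t k b / np.P k b)) (μ := np.mu k j)
    (L := (np.mu k b - np.mu k j) * (c * flF np π k b / np.P k b)) (np.mu_pos k j)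
    ((cj.div_const _).sub (cb.div_const _)) ((cb.div_const _).const_mul _)
    (by
      intro s t hs hst
      have e1 := h.hf k j s t hs hst
      have e2 := h.hf k b s t hs hst
      rw [intervalIntegral.integral_const_mul, intervalIntegral.integral_sub
        ((cj.div_const _).intervalIntegrable _ _) ((cb.div_const _).intervalIntegrable _ _),
        intervalIntegral.integral_div, intervalIntegral.integral_div]
      have e1' : f t k j / np.P k j - f s k j / np.P k j =
          (D t k - D s k) - np.mu k j * ((∫ x in s..t, f x k j) / np.P k j) := by
        rw [← sub_div, e1]; field_simp
      have e2' : f t k b / np.P k b - f s k b / np.P k b =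
          (D t k - D s k) - np.mu k b * ((∫ x in s..t, f x k b) / np.P k b) := by
        rw [← sub_div, e2]; field_simp
      linear_combination e1' - e2')
    ((hb.div_const _).const_mul _)
  have := (key.add (hb.div_const (np.P k b))).const_mul (np.P k j)
  refine (this.congr (fun t => ?_)).trans (le_of_eq ?_)
  · field_simp; ring
  · congr 1
    simp only [flF]; field_simp; ring

lemma fl_lim_e (h : FlSol np Q e f D) {c : ℝ}
    (hf : ∀ k j, Tendsto (fun t => f t k j) atTop (𝓝 (c * flF np π k j))) (i j : Fin r)
    (hij : i ≠ j) :
    Tendsto (fun t => e t i j) atTop (𝓝 (c * flW np Q π i j)) := by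
  have hc := h.cf
  have key := fl_conv (w := fun t => e t i j) (φ := fun t => Q i j * ∑ k, np.mu k i * f t k i)
    (L := Q i j * ∑ k, np.mu k i * (c * flF np π k i)) (np.mu_pos i j) (h.ce i j)
    ((continuous_finsetSum _ (fun k _ => (hc k i).const_mul _)).const_mul _)
    (h.he i j hij)
    ((tendsto_finsetSum _ (fun k _ => (hf k i).const_mul _)).const_mul _)
  convert key using 2
  have : ∑ k, np.mu k i * (c * flF np π k i) = c * flTh np π i := by
    rw [← flF_sum, Finset.mul_sum]
    exact Finset.sum_congr rfl fun k _ => by ring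
  rw [this]; simp only [flW]; ring

lemma fl_lim_d (h : FlSol np Q e f D) (hπ : FlPi np Q π) {c : ℝ}
    (hf : ∀ k j, Tendsto (fun t => f t k j) atTop (𝓝 (c * flF np π k j))) (i : Fin r)
    (hc : c * π i < np.lam i) :
    Tendsto (fun t => e t i i) atTop (𝓝 0) := by
  refine tendsto_order.2 ⟨fun l hl => Eventually.of_forall fun t => hl.trans_le (h.e0 t i i),
    fun ε hε => ?_⟩
  have hl := np.lam_pos i
  have hP := hπ.P0 i i
  have hm := np.mu_pos i i
  have hF := flF_mul (np := np) (π := π) i i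
  set w := ε / (2 * np.lam i) with hw
  have hw0 : 0 < w := by positivity
  have hlw : np.lam i * w = ε / 2 := by rw [hw]; field_simp
  have hg : 0 < np.lam i - c * π i := by linarith
  set η := np.P i i * w * (np.lam i - c * π i) / (2 * (2 + np.mu i i * w)) with hη
  have hη0 : 0 < η := by positivity
  have hη1 : η * (2 + np.mu i i * w) = np.P i i * w * (np.lam i - c * π i) / 2 := by
    rw [hη]; field_simp
  obtain ⟨T, hT⟩ := eventually_atTop.1 (Metric.tendsto_nhds.1 (hf i i) η hη0)
  filter_upwards [eventually_ge_atTop T, eventually_ge_atTop 0] with t ht ht0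
  by_contra hcon
  push Not at hcon
  have hpos : ∀ x, t < x → x ≤ t + w → 0 < e x i i := by
    intro x hx1 hx2
    have h1 := h.hd i t x ht0 hx1.le
    have h2 := h.Dle i t x ht0 hx1.le
    have h3 : 0 ≤ ∫ x in t..x, ((∑ k ∈ Finset.univ.filter (fun k => k ≠ i),
      np.mu k i * e x k i) + Q i i * ∑ k, np.mu k i * f x k i) :=
      intervalIntegral.integral_nonneg hx1.le (fun y _ => flAl_nonneg h hπ y i)
    have h4 : np.lam i * (x - t) ≤ np.lam i * w :=
      mul_le_mul_of_nonneg_left (by linarith) hl.le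
    linarith
  have hD := h.Dpos i t (t + w) ht0 (by linarith) hpos
  have hfe := h.hf i i t (t + w) ht0 (by linarith)
  have hb : ∀ x, t ≤ x → |f x i i - c * flF np π i i| < η := fun x hx => by
    have := hT x (by linarith)
    rwa [Real.dist_eq] at this
  have hI : (∫ x in t..(t + w), f x i i) ≤ (c * flF np π i i + η) * w := by
    have := intervalIntegral.integral_mono_on (a := t) (b := t + w) (μ := volume) (by linarith)
      ((h.cf i i).intervalIntegrable _ _)
      (intervalIntegrable_const (c := c * flF np π i i + η))
      (fun x hx => by have := abs_lt.1 (hb x hx.1); linarith)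
    rw [intervalIntegral.integral_const] at this
    simp only [smul_eq_mul] at this
    linarith
  have b1 := abs_lt.1 (hb t le_rfl)
  have b2 := abs_lt.1 (hb (t + w) (by linarith))
  have hI' := mul_le_mul_of_nonneg_left hI hm.le
  have hD' : np.P i i * (D (t + w) i - D t i) = np.P i i * w * np.lam i := by rw [hD]; ring
  have e1 : np.mu i i * ((c * flF np π i i + η) * w) =
      c * (π i * np.P i i) * w + η * (np.mu i i * w) := by rw [← hF]; ring
  have h0 : 0 < np.P i i * w * (np.lam i - c * π i) := by positivity
  nlinarith
end

lemma fl_final {r : ℕ} (hr : 1 ≤ r) (np : NetParams r)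
    (Q : Mat r) (hQ : IsRouting Q)
    (hP : ∀ i j, 0 < np.P i j) (hQd : ∀ i, 0 < Q i i)
    (e f : ℝ → Mat r) (u : ℝ → Fin r → ℝ)
    (hsol : IsFluidSol np Q e f u) :
    ∀ ε : ℝ, 0 < ε → ∃ T : ℝ, 0 < T ∧ ∀ t, T ≤ t →
      Metric.infDist (e t, f t) (eqSet np Q) < ε := by
  obtain ⟨D, h⟩ := fl_sol hsol hP
  obtain ⟨π, p1, p2, ⟨b, hb⟩, p4⟩ := fl_stat hr np Q hQ hP hQd
  have hπ : FlPi np Q π := ⟨hP, hQ.1, hQ.2, hQd, p1, p2, p4⟩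
  obtain ⟨c, hc0, hc1, hlow, hup⟩ := fl_level h hπ hb
  have hF := fun k j => fl_lim_f h hπ (fl_lim_fb hπ hlow hup k) j
  have hE := fl_lim_e (π := π) h hF
  have hmax : (fun t : ℝ => max t 0) =ᶠ[atTop] id := by
    filter_upwards [eventually_ge_atTop (0:ℝ)] with t ht using max_eq_left ht
  have hF' : ∀ k j, Tendsto (fun t => f t k j) atTop (𝓝 (c * flF np π k j)) := fun k j =>
    (hF k j).congr' (by filter_upwards [hmax] with t ht; simp only [ht, id])
  have hE' : ∀ i j, i ≠ j → Tendsto (fun t => e t i j) atTop (𝓝 (c * flW np Q π i j)) :=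
    fun i j hij => (hE i j hij).congr' (by filter_upwards [hmax] with t ht; simp only [ht, id])
  have hD' : ∀ i, c * π i < np.lam i → Tendsto (fun t => e t i i) atTop (𝓝 0) := fun i hi =>
    (fl_lim_d h hπ hF i hi).congr' (by filter_upwards [hmax] with t ht; simp only [ht, id])
  intro ε hε
  suffices hev : ∀ᶠ t in atTop, Metric.infDist (e t, f t) (eqSet np Q) < ε by
    obtain ⟨T, hT⟩ := eventually_atTop.1 hev
    exact ⟨max T 1, by positivity, fun t ht => hT t ((le_max_left _ _).trans ht)⟩
  by_contra hcon
  have hfr : ∃ᶠ t in atTop, ε ≤ Metric.infDist (e t, f t) (eqSet np Q) := by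
    simpa [Filter.Frequently] using hcon
  have hne : (atTop ⊓ 𝓟 {t : ℝ | ε ≤ Metric.infDist (e t, f t) (eqSet np Q)}).NeBot :=
    Filter.frequently_mem_iff_neBot.1 hfr
  obtain ⟨U, hU⟩ := Ultrafilter.exists_le (atTop ⊓ 𝓟 {t : ℝ | ε ≤ Metric.infDist (e t, f t) (eqSet np Q)})
  have hUt : (U : Filter ℝ) ≤ atTop := hU.trans inf_le_left
  have hUb : ∀ᶠ t in (U : Filter ℝ), ε ≤ Metric.infDist (e t, f t) (eqSet np Q) :=
    hU.trans inf_le_right (mem_principal_self _)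
  have hU0 : ∀ᶠ t in (U : Filter ℝ), (0:ℝ) ≤ t := hUt (eventually_ge_atTop 0)
  have hlim : ∀ i, ∃ x, Tendsto (fun t => e t i i) U (𝓝 x) := by
    intro i
    obtain ⟨x, -, hx⟩ := (isCompact_Icc (a := (0:ℝ)) (b := 1)).ultrafilter_le_nhds
      (U.map fun t => e t i i) (by
        rw [le_principal_iff]
        exact hU0.mono fun t ht => (hsol.mem_T t ht).1 i i)
    exact ⟨x, hx⟩
  choose x hx using hlim
  set p1 : Mat r := fun i j => if i = j then x i else c * flW np Q π i j with hp1
  set p2 : Mat r := fun i j => c * flF np π i j with hp2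
  have l1 : ∀ i j, Tendsto (fun t => e t i j) U (𝓝 (p1 i j)) := by
    intro i j
    by_cases hij : i = j
    · subst hij; simpa [hp1] using hx i
    · simpa [hp1, hij] using (hE' i j hij).mono_left hUt
  have l2 : ∀ i j, Tendsto (fun t => f t i j) U (𝓝 (p2 i j)) := fun i j =>
    (hF' i j).mono_left hUt
  have hmem : (p1, p2) ∈ eqSet np Q := by
    refine ⟨⟨fun i j => ?_, fun i j => ?_, ?_⟩, fun i => c * π i / np.lam i, fun i => ?_,
      fun i j => ?_, fun i j hij => ?_, fun i => ?_, fun i => ?_⟩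
    · exact isClosed_Icc.mem_of_tendsto (l1 i j) (hU0.mono fun t ht => (hsol.mem_T t ht).1 i j)
    · exact isClosed_Icc.mem_of_tendsto (l2 i j) (hU0.mono fun t ht => (hsol.mem_T t ht).2.1 i j)
    · have t1 : Tendsto (fun t => ∑ i, ∑ j, (e t i j + f t i j)) U
          (𝓝 (∑ i, ∑ j, (p1 i j + p2 i j))) :=
        tendsto_finsetSum _ fun i _ => tendsto_finsetSum _ fun j _ => (l1 i j).add (l2 i j)
      refine tendsto_nhds_unique t1 (tendsto_const_nhds.congr' ?_)
      filter_upwards [hU0] with t ht using (hsol.mem_T t ht).2.2.symm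
    · have := hπ.pos i
      have hl := np.lam_pos i
      refine ⟨by positivity, (div_le_one hl).2 ?_⟩
      nlinarith [hπ.le i]
    · have hl := (np.lam_pos i).ne'
      have := flF_mul (np := np) (π := π) i j
      simp only [hp2]
      rw [mul_left_comm, this]; field_simp
    · simp only [hp1, hp2, if_neg hij]
      rw [mul_left_comm, flW_mul, ← flF_sum, mul_left_comm, Finset.mul_sum]
      congr 1
      exact Finset.sum_congr rfl fun k _ => by ring
    · have hl := (np.lam_pos i).ne'
      have ha := flAl_lin (np := np) (Q := Q) (flW np Q π) (flF np π) 0 0 c i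
      rw [flAl_eq hπ] at ha
      have hz : flAl np Q 0 0 i = 0 := by simp [flAl]
      rw [hz, sub_zero] at ha
      rw [mul_div_cancel₀ _ hl, ← ha]
      unfold flAl
      congr 1
      · refine Finset.sum_congr (by ext; simp) fun k hk => ?_
        have hk' : k ≠ i := by simpa using hk
        simp [hp1, hk']
      · simp [hp2]
    · have hl := np.lam_pos i
      have hle : c * π i ≤ np.lam i := by nlinarith [hπ.le i, hπ.pos i]
      rcases hle.lt_or_eq with hlt | heq
      · have : p1 i i = 0 := tendsto_nhds_unique (l1 i i) ((hD' i hlt).mono_left hUt)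
        simp [this]
      · have h1 : c * π i / np.lam i = 1 := by rw [heq, div_self hl.ne']
        simp [h1]
  have hT : Tendsto (fun t => (e t, f t)) U (𝓝 (p1, p2)) :=
    (tendsto_pi_nhds.2 fun i => tendsto_pi_nhds.2 fun j => l1 i j).prodMk_nhds
      (tendsto_pi_nhds.2 fun i => tendsto_pi_nhds.2 fun j => l2 i j)
  have hd := (Metric.tendsto_nhds.1 hT ε hε).and hUb
  obtain ⟨t, h1, h2⟩ := hd.exists
  exact absurd (Metric.infDist_le_dist_of_mem (x := (e t, f t)) hmem) (by linarith)

/-- Theorem 4 (convergence of the fluid model to the equilibrium set): if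
`P_{ij} > 0` for all `i,j` and `Q_{ii} > 0` for all `i`, then every fluid
trajectory converges to the equilibrium set ℰ in the entrywise maximum metric
(the product/sup metric of the ambient space). -/
theorem stmt_15 {r : ℕ} (hr : 1 ≤ r) (np : NetParams r)
    (Q : Mat r) (hQ : IsRouting Q)
    (hP : ∀ i j, 0 < np.P i j) (hQd : ∀ i, 0 < Q i i)
    (e f : ℝ → Mat r) (u : ℝ → Fin r → ℝ)
    (hsol : IsFluidSol np Q e f u) :
    ∀ ε : ℝ, 0 < ε → ∃ T : ℝ, 0 < T ∧ ∀ t, T ≤ t →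
      Metric.infDist (e t, f t) (eqSet np Q) < ε := by
  exact fl_final hr np Q hQ hP hQd e f u hsol
end
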